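/- arXiv:math/0702296 — 10 statements merged into one kernel-verified Lean document; each statement's English description precedes it below -/
import Mathlib

section
/- For every infinite cardinal κ there exists a zero-dimensional Hausdorff topological space X of dispersion character Δ(X) = κ that is extraresolvable but not ω₁-resolvable. -/
/-!
On a set `X` of size `κ` fix an independent family `A` of `2 ^ κ` sets, all of whose finite Boolean
combinations (called atoms) have size `κ` (`exists_independent`). Split it as sets `D ξ`, `ξ < κ⁺`, and
sets `U j`, where the coordinates `j = (H, y)` range over `Set X × X`.

Let `𝓖` be a maximal filter, containing all sets with complement of size `< κ`, whose members meet
all atoms, including those that involve the `D ξ` (`exists_maximal_filter`). Let `𝓕` be generated by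
`𝓖` and the complements of `D ξ ∩ D η`, `ξ ≠ η` (`extFilter`). The topology has as subbase the sets
`(U (H, y) ∪ {y}) ∩ H`, for `H ∈ 𝓕`, and their complements (`clopenSet`). Up to a member of `𝓕` a
basic open set is an atom of the `U j`, so it meets every `D ξ` (`atom_clopenSet_nonempty`). Hence
every `D ξ` is dense and nonempty open sets have size `κ`. Each `F ∈ 𝓕` has dense interior, because
`F` is used at infinitely many coordinates. In particular `D ξ ∩ D η` is nowhere dense for `ξ ≠ η`,
and the space is extraresolvable.

If `E` is dense, then `Eᶜ ∉ 𝓖`, so by maximality `E` contains `T ∩ G` for an atom `T` and some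
`G ∈ 𝓖`. For disjoint dense sets the corresponding atoms must be incompatible, since the
intersection of two compatible atoms is an atom and meets every member of `𝓖`. By the countable
chain condition for finite partial functions (`countable_of_incompatible`), a pairwise disjoint
family of dense sets is countable.
-/

open Cardinal Set

universe u

/-- A space is `κ`-resolvable if it contains `κ` pairwise disjoint dense sets. -/
def IsResolvable (X : Type u) [TopologicalSpace X] (κ : Cardinal.{u}) : Prop :=
  ∃ 𝒟 : Set (Set X), #𝒟 = κ ∧ (∀ D ∈ 𝒟, Dense D) ∧ 𝒟.PairwiseDisjoint id

/-- A space is almost `κ`-resolvable if it contains `κ` dense sets any two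
of which have nowhere dense intersection. -/
def IsAlmostResolvable (X : Type u) [TopologicalSpace X] (κ : Cardinal.{u}) : Prop :=
  ∃ 𝒟 : Set (Set X), #𝒟 = κ ∧ (∀ D ∈ 𝒟, Dense D) ∧
    ∀ D ∈ 𝒟, ∀ E ∈ 𝒟, D ≠ E → IsNowhereDense (D ∩ E)

/-- The dispersion character `Δ(X) = min {|G| : G nonempty open}`. -/
noncomputable def dispersion (X : Type u) [TopologicalSpace X] : Cardinal.{u} :=
  sInf {c : Cardinal.{u} | ∃ G : Set X, IsOpen G ∧ G.Nonempty ∧ #G = c}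

/-- A space is extraresolvable if it is almost `Δ(X)⁺`-resolvable. -/
def IsExtraresolvable (X : Type u) [TopologicalSpace X] : Prop :=
  IsAlmostResolvable X (Order.succ (dispersion X))

section Construction

variable {X I : Type u}

/-- The finite Boolean combination of the sets `A i`, `i ∈ c`, in which `A i` occurs positively
exactly when `i ∈ m`. -/
def atom (A : I → Set X) (c : Finset I) (m : Set I) : Set X :=
  {x | ∀ i ∈ c, x ∈ A i ↔ i ∈ m}

/-- The Fichtenholz–Kantorovich–Hausdorff independent family: on
`Finset L × Finset (Finset L) × L` use the sets `{(a, 𝒜, l) | a ∩ S ∈ 𝒜}` for `S ⊆ L`. The third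
factor makes every Boolean combination have full cardinality. -/
lemma exists_independent (L : Type u) [Infinite L] (f : I → Set L) (hf : Function.Injective f) :
    ∃ A : I → Set (Finset L × Finset (Finset L) × L),
      ∀ c m, #L ≤ #(atom A c m) := by
  classical
  refine ⟨fun i => {x | x.1.filter (· ∈ f i) ∈ x.2.1}, fun c m => ?_⟩
  have hsep : ∀ i j : I, ∃ l : L, i ≠ j → ¬ (l ∈ f i ↔ l ∈ f j) := by
    intro i j
    by_cases h : i = j
    · exact ⟨Classical.arbitrary L, fun h' => absurd h h'⟩
    · have : f i ≠ f j := fun h' => h (hf h')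
      by_contra! hcon
      exact this (Set.ext fun l => (hcon l).2)
  choose d hd using hsep
  -- `a` separates the traces of the finitely many sets `f i`, `i ∈ c`.
  let a : Finset L := (c ×ˢ c).image fun p => d p.1 p.2
  let 𝒜 : Finset (Finset L) := (c.filter (· ∈ m)).image fun i => a.filter (· ∈ f i)
  have hmem : ∀ l : L, (a, 𝒜, l) ∈
      atom (fun i => {x : Finset L × Finset (Finset L) × L | x.1.filter (· ∈ f i) ∈ x.2.1}) c m := by
    intro l i hi
    constructor
    · intro h
      obtain ⟨j, hj, hji⟩ := Finset.mem_image.1 (show a.filter (· ∈ f i) ∈ 𝒜 from h)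
      obtain ⟨hjc, hjm⟩ := Finset.mem_filter.1 hj
      by_cases hij : j = i
      · exact hij ▸ hjm
      · exfalso
        have hda : d j i ∈ a :=
          Finset.mem_image.2 ⟨(j, i), Finset.mem_product.2 ⟨hjc, hi⟩, rfl⟩
        have := Finset.ext_iff.1 hji (d j i)
        simp only [Finset.mem_filter, hda, true_and] at this
        exact hd j i hij this
    · intro h
      exact Finset.mem_image.2 ⟨i, Finset.mem_filter.2 ⟨hi, h⟩, rfl⟩
  refine Cardinal.mk_le_of_injective (f := fun l => ⟨(a, 𝒜, l), hmem l⟩) ?_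
  intro l l' h
  simpa using h

/-- A family of pairwise incompatible finite partial functions into `2` is countable; the
partial function of index `α` has domain `c α` and is the characteristic function of `m α` there.
Induction on the size of the domains: every domain meets a fixed one, so all but one of the
functions split into finitely many subfamilies whose members share a value at a common point, and
this point can be erased. -/
lemma countable_of_incompatible_of_card {ι : Type*} [DecidableEq I] (m : ι → Set I) (n : ℕ) :
    ∀ (S : Set ι) (c : ι → Finset I), (∀ α ∈ S, (c α).card = n) →
      (S.Pairwise fun α β => ∃ i ∈ c α, i ∈ c β ∧ ¬ (i ∈ m α ↔ i ∈ m β)) → S.Countable := by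
  induction n with
  | zero =>
    intro S c hc hS
    refine Set.Subsingleton.countable fun α hα β hβ => ?_
    by_contra hne
    obtain ⟨i, hi, -⟩ := hS hα hβ hne
    simp [Finset.card_eq_zero.1 (hc α hα)] at hi
  | succ n ih =>
    intro S c hc hS
    rcases S.eq_empty_or_nonempty with rfl | ⟨α₀, hα₀⟩
    · exact Set.countable_empty
    have key : ∀ (i : I) (b : Prop), {α ∈ S | i ∈ c α ∧ (i ∈ m α ↔ b)}.Countable := by
      intro i b
      refine ih _ (fun α => (c α).erase i) ?_ ?_
      · rintro α ⟨hα, hi, -⟩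
        rw [Finset.card_erase_of_mem hi, hc α hα]; rfl
      · rintro α ⟨hα, hi, hb⟩ β ⟨hβ, hi', hb'⟩ hne
        obtain ⟨j, hj, hj', hjm⟩ := hS hα hβ hne
        have hji : j ≠ i := by
          rintro rfl
          exact hjm (hb.trans hb'.symm)
        exact ⟨j, Finset.mem_erase.2 ⟨hji, hj⟩, Finset.mem_erase.2 ⟨hji, hj'⟩, hjm⟩
    have hcov : S ⊆ {α₀} ∪ ⋃ i ∈ (c α₀ : Set I), ({α ∈ S | i ∈ c α ∧ (i ∈ m α ↔ True)} ∪
        {α ∈ S | i ∈ c α ∧ (i ∈ m α ↔ False)}) := by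
      intro α hα
      by_cases h : α = α₀
      · exact Or.inl h
      · obtain ⟨i, hi, hi', -⟩ := hS hα hα₀ h
        refine Or.inr (Set.mem_biUnion (x := i) hi' ?_)
        by_cases him : i ∈ m α
        · exact Or.inl ⟨hα, hi, by simpa using him⟩
        · exact Or.inr ⟨hα, hi, by simpa using him⟩
    refine Set.Countable.mono hcov ((Set.countable_singleton _).union ?_)
    exact (c α₀).countable_toSet.biUnion fun i _ => (key i _).union (key i _)

lemma countable_of_incompatible {ι : Type*} (c : ι → Finset I) (m : ι → Set I)
    (h : Pairwise fun α β => ∃ i ∈ c α, i ∈ c β ∧ ¬ (i ∈ m α ↔ i ∈ m β)) : Countable ι := by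
  classical
  have : (⋃ n : ℕ, {α : ι | (c α).card = n}).Countable :=
    Set.countable_iUnion fun n =>
      countable_of_incompatible_of_card m n _ c (fun _ h => h) (fun _ _ _ _ hne => h hne)
  rw [← Set.countable_univ_iff]
  refine this.mono fun α _ => ?_
  simp

/-- Among the filters that refine `l₀` and meet every set of `𝒯` there is a maximal one; a set
outside it must be disjoint from `T ∩ G` for some `T ∈ 𝒯` and some member `G`. -/
lemma exists_maximal_filter (𝒯 : Set (Set X)) (l₀ : Filter X)
    (h₀ : ∀ T ∈ 𝒯, ∀ G ∈ l₀, (T ∩ G).Nonempty) :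
    ∃ 𝓖 ≤ l₀, (∀ T ∈ 𝒯, ∀ G ∈ 𝓖, (T ∩ G).Nonempty) ∧
      ∀ E, E ∉ 𝓖 → ∃ T ∈ 𝒯, ∃ G ∈ 𝓖, T ∩ G ⊆ Eᶜ := by
  let s : Set (Filter X)ᵒᵈ :=
    {l | ∀ T ∈ 𝒯, ∀ G ∈ OrderDual.ofDual l, (T ∩ G).Nonempty}
  obtain ⟨𝓖, hle, hmax⟩ := zorn_le_nonempty₀ s (by
    intro C hC hchain y hy
    refine ⟨OrderDual.toDual (⨅ l ∈ C, OrderDual.ofDual l), ?_, ?_⟩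
    · intro T hT G hG
      have hG' : G ∈ ⨅ l ∈ C, OrderDual.ofDual l := hG
      rw [Filter.mem_biInf_of_directed] at hG'
      · obtain ⟨l, hl, hGl⟩ := hG'
        exact hC hl T hT G hGl
      · intro l hl l' hl'
        rcases hchain.total hl hl' with h | h
        · exact ⟨l', hl', h, le_rfl⟩
        · exact ⟨l, hl, le_rfl, h⟩
      · exact ⟨y, hy⟩
    · intro z hz
      exact (iInf₂_le z hz : ⨅ l ∈ C, OrderDual.ofDual l ≤ OrderDual.ofDual z))
    (OrderDual.toDual l₀) h₀
  refine ⟨OrderDual.ofDual 𝓖, hle, hmax.1, fun E hE => ?_⟩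
  by_contra! hcon
  apply hE
  have hmem : OrderDual.toDual (OrderDual.ofDual 𝓖 ⊓ Filter.principal E) ∈ s := by
    intro T hT G hG
    have hG' : {x | x ∈ E → x ∈ G} ∈ OrderDual.ofDual 𝓖 := Filter.mem_inf_principal.1 hG
    obtain ⟨x, ⟨hxT, hxG⟩, hxE⟩ := Set.not_subset.1 (hcon T hT _ hG')
    exact ⟨x, hxT, hxG (not_not.1 hxE)⟩
  have := hmax.2 hmem (show OrderDual.ofDual 𝓖 ⊓ Filter.principal E ≤ OrderDual.ofDual 𝓖 from
    inf_le_left)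
  exact (show OrderDual.ofDual 𝓖 ≤ OrderDual.ofDual 𝓖 ⊓ Filter.principal E from this)
    (Filter.mem_inf_of_right (Filter.mem_principal_self E))

/-- The filter of sets whose complement has cardinality less than `κ`. Unlike
`Filter.cocardinal`, no regularity of `κ` is assumed. -/
def coSmall (X : Type u) (κ : Cardinal.{u}) (hκ : ℵ₀ ≤ κ) : Filter X where
  sets := {G | #(Gᶜ : Set X) < κ}
  univ_sets := by
    simpa using lt_of_lt_of_le aleph0_pos hκ
  sets_of_superset := fun h hst =>
    lt_of_le_of_lt (Cardinal.mk_le_mk_of_subset (Set.compl_subset_compl.2 hst)) h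
  inter_sets := fun {s t} hs ht => by
    simp only [Set.mem_ofPred_eq, Set.compl_inter]
    exact lt_of_le_of_lt (Cardinal.mk_union_le _ _) (Cardinal.add_lt_of_lt hκ hs ht)

/-- The filter generated by `𝓖` and the complements of the sets `D ξ ∩ D η`, `ξ ≠ η`. -/
def extFilter {K : Type u} (𝓖 : Filter X) (D : K → Set X) : Filter X where
  sets := {F | ∃ G ∈ 𝓖, ∃ a : Finset K, ∀ x ∈ G,
    (∀ ξ ∈ a, ∀ η ∈ a, ξ ≠ η → x ∈ D ξ → x ∉ D η) → x ∈ F}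
  univ_sets := ⟨Set.univ, Filter.univ_mem, ∅, fun _ _ _ => trivial⟩
  sets_of_superset := by
    rintro F F' ⟨G, hG, a, h⟩ hFF'
    exact ⟨G, hG, a, fun x hx h' => hFF' (h x hx h')⟩
  inter_sets := by
    classical
    rintro F F' ⟨G, hG, a, h⟩ ⟨G', hG', a', h'⟩
    refine ⟨G ∩ G', Filter.inter_mem hG hG', a ∪ a', fun x hx hxa => ⟨h x hx.1 ?_, h' x hx.2 ?_⟩⟩
    · exact fun ξ hξ η hη => hxa ξ (Finset.mem_union_left _ hξ) η (Finset.mem_union_left _ hη)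
    · exact fun ξ hξ η hη => hxa ξ (Finset.mem_union_right _ hξ) η (Finset.mem_union_right _ hη)

lemma extFilter_le {K : Type u} (𝓖 : Filter X) (D : K → Set X) : extFilter 𝓖 D ≤ 𝓖 :=
  fun F hF => ⟨F, hF, ∅, fun _ hx _ => hx⟩

lemma compl_inter_mem_extFilter {K : Type u} (𝓖 : Filter X) (D : K → Set X) {ξ η : K}
    (h : ξ ≠ η) : (D ξ ∩ D η)ᶜ ∈ extFilter 𝓖 D := by
  classical
  refine ⟨Set.univ, Filter.univ_mem, {ξ, η}, fun x _ hx hxD => ?_⟩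
  exact hx ξ (by simp) η (by simp) h hxD.1 hxD.2

/-- The topology with subbase the sets `V j` and their complements. -/
lemma exists_topology {J : Type u} (V : J → Set X)
    (hsep : ∀ x y : X, x ≠ y → ∃ j, y ∈ V j ∧ x ∉ V j) :
    ∃ _ : TopologicalSpace X, TopologicalSpace.IsTopologicalBasis {s : Set X | IsClopen s} ∧
      T2Space X ∧ (∀ j, IsOpen (V j)) ∧
      ∀ W : Set X, IsOpen W → ∀ x ∈ W, ∃ t : Finset J, atom V t {j | x ∈ V j} ⊆ W := by
  classical
  let φ : X → J → Bool := fun x j => decide (x ∈ V j)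
  let τ : TopologicalSpace X := TopologicalSpace.induced φ inferInstance
  have hφ : Continuous φ := continuous_induced_dom
  have hinj : Function.Injective φ := by
    intro x y hxy
    by_contra hne
    obtain ⟨j, hy, hx⟩ := hsep x y hne
    have := congrFun hxy j
    simp [φ, hy, hx] at this
  have hV : ∀ j, IsOpen (V j) := by
    intro j
    have : V j = (fun x => φ x j) ⁻¹' {true} := by
      ext x; simp [φ]
    rw [this]
    exact (isOpen_discrete _).preimage ((continuous_apply j).comp hφ)
  refine ⟨τ, ?_, T2Space.of_injective_continuous hinj hφ, hV, ?_⟩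
  · refine TopologicalSpace.isTopologicalBasis_of_isOpen_of_nhds (fun s hs => hs.isOpen) ?_
    intro x W hx hW
    obtain ⟨O, hO, rfl⟩ := isOpen_induced_iff.1 hW
    obtain ⟨C, hC, hxC, hCO⟩ :=
      (isTopologicalBasis_isClopen (X := J → Bool)).exists_subset_of_mem_open hx hO
    exact ⟨φ ⁻¹' C, IsClopen.preimage hC hφ, hxC, Set.preimage_mono hCO⟩
  · intro W hW x hx
    obtain ⟨O, hO, rfl⟩ := isOpen_induced_iff.1 hW
    obtain ⟨t, u, hu, htu⟩ := isOpen_pi_iff.1 hO (φ x) hx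
    refine ⟨t, fun y hy => htu fun j hj => ?_⟩
    have : φ y j = φ x j := by
      simp only [φ, decide_eq_decide]
      exact hy j hj
    rw [this]
    exact (hu j hj).2

/-- The clopen set attached to the coordinate `(H, y)`: the set `U (H, y)`, with the point `y`
added so that points get separated, is cut down to `H` if `H` belongs to the filter `𝓕`. -/
def clopenSet (𝓕 : Filter X) (U : Set X × X → Set X) (j : Set X × X) : Set X :=
  {x | (x ∈ U j ∨ x = j.2) ∧ (j.1 ∈ 𝓕 → x ∈ j.1)}

/-- Every set `D ξ = A (inl ξ)` meets every basic open set inside every `F` in the extended filter.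
Up to a member of that filter the basic open set is an atom of the unmodified sets `A (inr j)`; it
is met by a point of `D ξ` lying in no other `D η` from a given finite list, which therefore avoids
finitely many prescribed sets `D η ∩ D ζ` with `η ≠ ζ`. -/
lemma atom_clopenSet_nonempty {K : Type u} (A : K ⊕ (Set X × X) → Set X) (𝓖 : Filter X)
    (hfin : ∀ y : X, {y}ᶜ ∈ 𝓖)
    (hA : ∀ c m, ∀ G ∈ 𝓖, (atom A c m ∩ G).Nonempty)
    (t : Finset (Set X × X)) (σ : Set (Set X × X)) (ξ : K) (F : Set X)
    (hF : F ∈ extFilter 𝓖 (A ∘ Sum.inl)) :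
    (atom (clopenSet (extFilter 𝓖 (A ∘ Sum.inl)) (A ∘ Sum.inr)) t σ ∩
      A (Sum.inl ξ) ∩ F).Nonempty := by
  classical
  set 𝓕 := extFilter 𝓖 (A ∘ Sum.inl) with h𝓕
  have hF' : F ∩ ⋂ j ∈ t, {x | x ≠ j.2 ∧ (j.1 ∈ 𝓕 → x ∈ j.1)} ∈ 𝓕 := by
    refine Filter.inter_mem hF ((Filter.biInter_finset_mem t).2 fun j _ => ?_)
    by_cases hj : j.1 ∈ 𝓕
    · filter_upwards [hj, extFilter_le 𝓖 _ (hfin j.2)] with x hx hx'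
      exact ⟨hx', fun _ => hx⟩
    · filter_upwards [extFilter_le 𝓖 _ (hfin j.2)] with x hx'
      exact ⟨hx', fun h => absurd h hj⟩
  obtain ⟨G, hG, a, ha⟩ := hF'
  obtain ⟨x, hx, hxG⟩ := hA
    ((insert ξ a).image Sum.inl ∪ t.image Sum.inr) (Sum.elim (· = ξ) (· ∈ σ)) G hG
  have hD : ∀ η ∈ insert ξ a, x ∈ A (Sum.inl η) ↔ η = ξ := fun η hη =>
    hx (Sum.inl η) (Finset.mem_union_left _ (Finset.mem_image_of_mem _ hη))
  have hU : ∀ j ∈ t, x ∈ A (Sum.inr j) ↔ j ∈ σ := fun j hj =>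
    hx (Sum.inr j) (Finset.mem_union_right _ (Finset.mem_image_of_mem _ hj))
  obtain ⟨hxF, hxt⟩ := ha x hxG fun η hη η' hη' hne h h' => hne
    (((hD η (Finset.mem_insert_of_mem hη)).1 h).trans
      ((hD η' (Finset.mem_insert_of_mem hη')).1 h').symm)
  refine ⟨x, ⟨fun j hj => ?_, (hD ξ (Finset.mem_insert_self _ _)).2 rfl⟩, hxF⟩
  obtain ⟨h1, h2⟩ := Set.mem_iInter₂.1 hxt j hj
  rw [← hU j hj]
  exact ⟨fun h => h.1.resolve_right h1, fun h => ⟨Or.inl h, h2⟩⟩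

end Construction

/-- For every infinite cardinal `κ` there is a zero-dimensional Hausdorff space of
dispersion character `κ` that is extraresolvable but not `ω₁`-resolvable. -/
theorem stmt0 (κ : Cardinal.{u}) (hκ : ℵ₀ ≤ κ) :
    ∃ (X : Type u) (_ : TopologicalSpace X),
      TopologicalSpace.IsTopologicalBasis {s : Set X | IsClopen s} ∧
      T2Space X ∧
      dispersion X = κ ∧
      IsExtraresolvable X ∧
      ¬ IsResolvable X (aleph 1) := by
  classical
  let L : Type u := κ.out
  let K : Type u := (Order.succ κ).out
  have hL : #L = κ := Cardinal.mk_out κ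
  have hK : #K = Order.succ κ := Cardinal.mk_out _
  have : Infinite L := Cardinal.infinite_iff.2 (hL ▸ hκ)
  have : Nonempty K := by
    rw [← Cardinal.mk_ne_zero_iff, hK]
    exact (lt_of_le_of_lt zero_le (Order.lt_succ κ)).ne'
  let X : Type u := Finset L × Finset (Finset L) × L
  have hX : #X = κ := by
    simp [X, hL, Cardinal.mul_eq_self hκ]
  have : Infinite X := Cardinal.infinite_iff.2 (hX ▸ hκ)
  have hI : #(K ⊕ (Set X × X)) ≤ #(Set L) := by
    have h2 : κ ≤ 2 ^ κ := (Cardinal.cantor κ).le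
    have h3 : Order.succ κ ≤ 2 ^ κ := Order.succ_le_of_lt (Cardinal.cantor κ)
    have h4 : ℵ₀ ≤ 2 ^ κ := hκ.trans h2
    simp only [Cardinal.mk_sum, Cardinal.mk_prod, Cardinal.mk_set, Cardinal.lift_id, hX, hK, hL]
    refine Cardinal.add_le_of_le h4 h3 ?_
    exact (mul_le_mul' le_rfl h2).trans (Cardinal.mul_eq_self h4).le
  obtain ⟨f⟩ := hI
  obtain ⟨A, hA⟩ := exists_independent L f f.injective
  rw [hL] at hA
  obtain ⟨𝓖, h𝓖le, h𝓖, h𝓖max⟩ := exists_maximal_filter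
    {T : Set X | ∃ c m, T = atom A c m} (coSmall X κ hκ) (by
      rintro _ ⟨c, m, rfl⟩ G hG
      by_contra hcon
      have hsub : atom A c m ⊆ Gᶜ := fun x hx hxG => hcon ⟨x, hx, hxG⟩
      exact absurd (lt_of_le_of_lt ((hA c m).trans (Cardinal.mk_le_mk_of_subset hsub)) hG)
        (lt_irrefl _))
  have h𝓖A : ∀ c m, ∀ G ∈ 𝓖, (atom A c m ∩ G).Nonempty := fun c m => h𝓖 _ ⟨c, m, rfl⟩
  have hsmall : ∀ S : Set X, #S < κ → Sᶜ ∈ 𝓖 := by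
    intro S hS
    refine h𝓖le ?_
    change #(Sᶜᶜ : Set X) < κ
    rwa [compl_compl]
  have hfin : ∀ y : X, {y}ᶜ ∈ 𝓖 := fun y => hsmall _ (by
    simpa using lt_of_lt_of_le Cardinal.one_lt_aleph0 hκ)
  let D : K → Set X := A ∘ Sum.inl
  let 𝓕 := extFilter 𝓖 D
  let V := clopenSet 𝓕 (A ∘ Sum.inr)
  have hkey : ∀ t σ ξ, ∀ F ∈ 𝓕, (atom V t σ ∩ D ξ ∩ F).Nonempty := fun t σ ξ F hF =>
    atom_clopenSet_nonempty A 𝓖 hfin h𝓖A t σ ξ F hF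
  obtain ⟨τ, hbasis, hT2, hVopen, hnhds⟩ := exists_topology V (by
    intro x y hxy
    refine ⟨({x}ᶜ, y), ⟨Or.inr rfl, fun _ => hxy.symm⟩, fun h => ?_⟩
    exact h.2 (extFilter_le 𝓖 D (hfin x)) rfl)
  have hmeet : ∀ W : Set X, IsOpen W → W.Nonempty → ∀ ξ, ∀ F ∈ 𝓕, (W ∩ D ξ ∩ F).Nonempty := by
    rintro W hW ⟨x, hx⟩ ξ F hF
    obtain ⟨t, ht⟩ := hnhds W hW x hx
    obtain ⟨z, ⟨hz, hzD⟩, hzF⟩ := hkey t _ ξ F hF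
    exact ⟨z, ⟨ht hz, hzD⟩, hzF⟩
  -- Members of `𝓕` have dense interior: the coordinates `(F, y)` with `y` varying over the
  -- infinite set `X` provide one outside the finite support of a given basic open set.
  have hdenseInt : ∀ W : Set X, IsOpen W → W.Nonempty → ∀ F ∈ 𝓕,
      ∃ O : Set X, IsOpen O ∧ O ⊆ F ∧ (W ∩ O).Nonempty := by
    rintro W hW ⟨x, hx⟩ F hF
    obtain ⟨t, ht⟩ := hnhds W hW x hx
    obtain ⟨y, hy⟩ := Infinite.exists_notMem_finset (t.image Prod.snd)
    have hyt : (F, y) ∉ t := fun h => hy (Finset.mem_image_of_mem Prod.snd h)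
    refine ⟨V (F, y), hVopen _, fun z hz => hz.2 hF, ?_⟩
    obtain ⟨z, ⟨hz, -⟩, -⟩ := hkey (insert (F, y) t) (insert (F, y) {j | x ∈ V j})
      (Classical.arbitrary K) Set.univ Filter.univ_mem
    refine ⟨z, ht fun j hj => ?_, ?_⟩
    · rw [hz j (Finset.mem_insert_of_mem hj)]
      have : j ≠ (F, y) := fun h => hyt (h ▸ hj)
      simp [this]
    · exact (hz (F, y) (Finset.mem_insert_self _ _)).2 (Set.mem_insert _ _)
  have hdense : ∀ ξ, Dense (D ξ) := by
    intro ξ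
    rw [dense_iff_inter_open]
    intro W hW hne
    obtain ⟨z, hz, -⟩ := hmeet W hW hne ξ Set.univ Filter.univ_mem
    exact ⟨z, hz⟩
  have hnwd : ∀ ξ η, ξ ≠ η → IsNowhereDense (D ξ ∩ D η) := by
    intro ξ η hne
    by_contra hcon
    have hW : (interior (closure (D ξ ∩ D η))).Nonempty := Set.nonempty_iff_ne_empty.2 hcon
    obtain ⟨O, hO, hOF, hWO⟩ := hdenseInt _ isOpen_interior hW _ (compl_inter_mem_extFilter 𝓖 D hne)
    obtain ⟨z, hzW, hzO⟩ := hWO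
    obtain ⟨w, hwO, hw⟩ := mem_closure_iff.1 (interior_subset hzW) O hO hzO
    exact hOF hwO hw
  have hdisp : dispersion X = κ := by
    apply le_antisymm
    · exact csInf_le' ⟨Set.univ, isOpen_univ, Set.univ_nonempty, by rw [Cardinal.mk_univ, hX]⟩
    · refine le_csInf ⟨_, Set.univ, isOpen_univ, Set.univ_nonempty, rfl⟩ ?_
      rintro _ ⟨W, hW, hne, rfl⟩
      by_contra! hlt
      obtain ⟨z, ⟨hz, -⟩, hz'⟩ := hmeet W hW hne (Classical.arbitrary K) _
        (extFilter_le 𝓖 D (hsmall W hlt))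
      exact hz' hz
  refine ⟨X, τ, hbasis, hT2, hdisp, ?_, ?_⟩
  · have hinj : Function.Injective D := by
      intro ξ η h
      by_contra hne
      have h1 := hnwd ξ η hne
      rw [← h, Set.inter_self, IsNowhereDense, (hdense ξ).closure_eq, interior_univ] at h1
      exact Set.univ_nonempty.ne_empty h1
    refine ⟨Set.range D, ?_, ?_, ?_⟩
    · rw [Cardinal.mk_range_eq D hinj, hK, hdisp]
    · rintro _ ⟨ξ, rfl⟩
      exact hdense ξ
    · rintro _ ⟨ξ, rfl⟩ _ ⟨η, rfl⟩ hne
      exact hnwd ξ η fun h => hne (h ▸ rfl)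
  · rintro ⟨𝒟, hcard, h𝒟, hdisj⟩
    -- A dense set contains an atom up to the filter `𝓖`, since its complement is not in `𝓖`.
    have hex : ∀ E : 𝒟, ∃ c m, ∃ G ∈ 𝓖, atom A c m ∩ G ⊆ E := by
      intro E
      have hE : (E : Set X)ᶜ ∉ 𝓖 := by
        intro h
        obtain ⟨O, hO, hOE, hne⟩ := hdenseInt Set.univ isOpen_univ Set.univ_nonempty _
          (extFilter_le 𝓖 D h)
        rw [Set.univ_inter] at hne
        obtain ⟨z, hzO, hzE⟩ := (h𝒟 E E.2).inter_open_nonempty O hO hne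
        exact hOE hzO hzE
      obtain ⟨_, ⟨c, m, rfl⟩, G, hG, h⟩ := h𝓖max _ hE
      exact ⟨c, m, G, hG, by rwa [compl_compl] at h⟩
    choose c m G hG hsub using hex
    have hcount : Countable 𝒟 := by
      refine countable_of_incompatible c m fun E E' hne => ?_
      by_contra! hcon
      obtain ⟨x, hx, hxG⟩ := h𝓖A (c E ∪ c E')
        {i | (i ∈ c E ∧ i ∈ m E) ∨ (i ∈ c E' ∧ i ∈ m E')} _ (Filter.inter_mem (hG E) (hG E'))
      have h1 : x ∈ (E : Set X) := hsub E ⟨fun i hi => by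
        rw [hx i (Finset.mem_union_left _ hi)]
        have := hcon i hi
        simp only [Set.mem_ofPred_eq]
        tauto, hxG.1⟩
      have h2 : x ∈ (E' : Set X) := hsub E' ⟨fun i hi => by
        rw [hx i (Finset.mem_union_right _ hi)]
        have := hcon i
        simp only [Set.mem_ofPred_eq]
        tauto, hxG.2⟩
      exact Set.disjoint_left.1 (hdisj E.2 E'.2 fun h => hne (Subtype.ext h)) h1 h2
    have := Cardinal.mk_le_aleph0_iff.2 hcount
    rw [hcard] at this
    exact absurd this (not_le.2 Cardinal.aleph0_lt_aleph_one)
end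

section
/- For every infinite cardinal κ there exists a zero-dimensional Hausdorff topological space X with |X| = κ and dispersion character Δ(X) = κ that is almost 2^κ-resolvable (hence extraresolvable) but not ω₁-resolvable. -/
/-!
The space is built from an ideal of null sets that has `2 ^ κ` almost disjoint positive sets
but no uncountable family of pairwise disjoint positive sets.

Let `K` have cardinality `κ`. A point of `X` consists of a level `n`, a finite `F ⊆ K`, and two
functions `a : 𝒫 F → {0, …, n}` and `b : 𝒫 F → Bool`; so `X` splits into finite blocks indexed by
`(n, F)`. Fix an ultrafilter on the finite subsets of `K` containing all cones `{F | F₀ ⊆ F}`.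
Writing `μ n E` for the limit along it of the relative size of `E` in the block `(n, F)`, a set `E`
is null if `(n + 1) * μ n E → 0` as `n → ∞`.

* If `E` is positive then `μ n E > ε` for some `n` and `ε > 0`, and for given `n, ε` this holds for
  only finitely many sets of a disjoint family. So disjoint families of positive sets are
  countable (`countable_of_disjoint`).
* For `S ⊆ K` let `D S` be the set of points with `a (F ∩ S) = 0` and `A S` that of points with
  `b (F ∩ S) = true`. These are independent: `μ n (D S) = 1 / (n + 1)`, and intersecting with a
  finite Boolean combination of `k` of the `A T` multiplies this by `2 ^ (-k)`, so that the result
  is positive (`not_null_dset_inter`); while `μ n (D S ∩ D T) = 1 / (n + 1) ^ 2` for `S ≠ T`, so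
  `D S ∩ D T` is null (`null_dset_inter`).

The topology is generated by declaring clopen the sets `(A S \ N) ∪ M`, where `S ↦ (N, M)` runs
through all pairs of null sets, each infinitely often. Finite Boolean combinations change only by
null sets, hence every `D S` is dense. Every null set `N` is nowhere dense, since a basic open set
can be shrunk by an unused generator `A S \ N`. So dense sets are positive, there is no uncountable
disjoint family of them, and the `D S` witness almost `2 ^ κ`-resolvability.
-/

open Cardinal Set

universe u

open Filter Topology

namespace ResolvabilityExample

/-- The underlying set: a level `n`, a finite set `F`, and functions `Set F → Fin (n + 1)` and
`Set F → Bool`. -/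
abbrev Pt (K : Type u) : Type u :=
  Σ p : ℕ × Finset K, (Set p.2 → Fin (p.1 + 1)) × (Set p.2 → Bool)

variable {K : Type u}

/-- The block of points with given level `n` and finite set `F`. -/
abbrev Block (n : ℕ) (F : Finset K) : Type u := (Set F → Fin (n + 1)) × (Set F → Bool)

/-- The trace `F ∩ S`, as a subset of `F`. -/
abbrev tr (F : Finset K) (S : Set K) : Set F := Subtype.val ⁻¹' S

/-- The part of `E` in the block `(n, F)`. -/
def slice (E : Set (Pt K)) (n : ℕ) (F : Finset K) : Set (Block n F) :=
  {h | (⟨(n, F), h⟩ : Pt K) ∈ E}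

/-- An ultrafilter on the finite subsets of `K` containing all cones. -/
noncomputable def uf (K : Type u) : Ultrafilter (Finset K) := Ultrafilter.of atTop

lemma uf_le : (uf K : Filter (Finset K)) ≤ atTop := Ultrafilter.of_le _

/-- `E` is null if `(n + 1) * μ n E → 0`, where `μ n E` is the limit along `uf K` of the relative
size of `E` in the blocks of level `n`. This is spelled out with `ε = 1 / m` and without
limits of real numbers. -/
def Null (E : Set (Pt K)) : Prop :=
  ∀ m : ℕ, ∃ n₀ : ℕ, ∀ n ≥ n₀, ∀ᶠ F in (uf K : Filter (Finset K)),
    (n + 1) * m * (slice E n F).ncard ≤ Nat.card (Block n F)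

/-! ### The ideal of null sets -/

lemma Null.mono {E E' : Set (Pt K)} (h : Null E') (hE : E ⊆ E') : Null E := by
  intro m
  obtain ⟨n₀, hn⟩ := h m
  refine ⟨n₀, fun n hn' => (hn n hn').mono fun F hF => le_trans ?_ hF⟩
  exact Nat.mul_le_mul_left _ (Set.ncard_le_ncard (fun x hx => hE hx) (Set.toFinite _))

lemma Null.union {E E' : Set (Pt K)} (h : Null E) (h' : Null E') : Null (E ∪ E') := by
  intro m
  obtain ⟨n₀, hn⟩ := h (2 * m)
  obtain ⟨n₁, hn1⟩ := h' (2 * m)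
  refine ⟨max n₀ n₁, fun n hn' => ?_⟩
  filter_upwards [hn n (le_trans (le_max_left _ _) hn'), hn1 n (le_trans (le_max_right _ _) hn')]
    with F h1 h2
  have h3 : (slice (E ∪ E') n F).ncard ≤ (slice E n F).ncard + (slice E' n F).ncard :=
    Set.ncard_union_le (slice E n F) (slice E' n F)
  have := Nat.mul_le_mul_left ((n + 1) * m) h3
  nlinarith

/-- Positive sets meet cofinally many blocks. -/
lemma null_of_forall_ge {E : Set (Pt K)} (F₀ : Finset K)
    (h : ∀ x ∈ E, ¬ F₀ ≤ x.1.2) : Null E := by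
  intro m
  refine ⟨0, fun n _ => ?_⟩
  filter_upwards [uf_le (eventually_ge_atTop F₀)] with F hF
  have : slice E n F = ∅ := by
    ext y
    simp only [Set.mem_empty_iff_false, iff_false]
    exact fun hy => h _ hy hF
  simp [this]

lemma null_empty : Null (∅ : Set (Pt K)) :=
  null_of_forall_ge ∅ (by simp)

lemma null_biUnion {ι : Type*} (G : Finset ι) (E : ι → Set (Pt K)) (h : ∀ i ∈ G, Null (E i)) :
    Null (⋃ i ∈ G, E i) := by
  classical
  induction G using Finset.induction_on with
  | empty => simpa using null_empty
  | insert i G hi ih =>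
    rw [Finset.set_biUnion_insert]
    exact (h i (by simp)).union (ih fun j hj => h j (by simp [hj]))

lemma null_singleton [Infinite K] (x : Pt K) : Null {x} := by
  classical
  obtain ⟨k, hk⟩ := Infinite.exists_notMem_finset x.1.2
  refine null_of_forall_ge {k} ?_
  rintro y rfl h
  exact hk (h (by simp))

lemma card_le_of_not_null [Infinite K] {E : Set (Pt K)} (h : ¬ Null E) : #K ≤ #E := by
  have hc : (⋃ x : E, (x.1.1.2 : Set K)) = Set.univ := by
    refine Set.eq_univ_of_forall fun k => ?_
    by_contra hk
    refine h (null_of_forall_ge {k} fun x hx hle => hk ?_)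
    exact Set.mem_iUnion.2 ⟨⟨x, hx⟩, by simpa using hle⟩
  rcases E.finite_or_infinite with hE | hE
  · have := hE.to_subtype
    have hf : (⋃ x : E, (x.1.1.2 : Set K)).Finite :=
      Set.finite_iUnion fun x => Finset.finite_toSet _
    rw [hc] at hf
    exact absurd hf Set.infinite_univ
  · have hinf : ℵ₀ ≤ #E := by
      rw [Cardinal.aleph0_le_mk_iff]
      exact hE.to_subtype
    calc #K = #(Set.univ : Set K) := Cardinal.mk_univ.symm
      _ = #(⋃ x : E, (x.1.1.2 : Set K)) := by rw [hc]
      _ ≤ #E * ⨆ x : E, #(x.1.1.2 : Set K) := Cardinal.mk_iUnion_le _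
      _ ≤ #E * ℵ₀ := by
        refine mul_le_mul_right (ciSup_le' fun x => ?_) _
        exact (Cardinal.lt_aleph0_of_finite _).le
      _ = #E := Cardinal.mul_aleph0_eq hinf

/-- The pigeonhole principle for the finitely additive measures `μ n`: to each positive set is
attached a pair `(m, n)` with `(n + 1) * m * μ n E ≥ 1`, and at most `(n + 1) * m` disjoint sets
can share a pair. -/
lemma countable_of_disjoint (𝒟 : Set (Set (Pt K))) (hd : 𝒟.PairwiseDisjoint id)
    (hp : ∀ E ∈ 𝒟, ¬ Null E) : 𝒟.Countable := by
  classical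
  have h1 : ∀ E ∈ 𝒟, ∃ q : ℕ × ℕ, ∀ᶠ F in (uf K : Filter (Finset K)),
      Nat.card (Block q.2 F) < (q.2 + 1) * q.1 * (slice E q.2 F).ncard := by
    intro E hE
    have := hp E hE
    unfold Null at this
    push Not at this
    obtain ⟨m, hm⟩ := this
    obtain ⟨n, -, hn⟩ := hm 0
    exact ⟨(m, n), hn⟩
  choose! q hq using h1
  have h2 : 𝒟 = ⋃ p : ℕ × ℕ, {E ∈ 𝒟 | q E = p} := by
    ext E; simp
  rw [h2]
  refine Set.countable_iUnion fun p => Set.Finite.countable ?_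
  by_contra hinf
  obtain ⟨T, hT, hTc⟩ := Set.Infinite.exists_subset_card_eq hinf ((p.2 + 1) * p.1)
  have h3 : ∀ᶠ F in (uf K : Filter (Finset K)), ∀ E ∈ T,
      Nat.card (Block p.2 F) < (p.2 + 1) * p.1 * (slice E p.2 F).ncard := by
    rw [Filter.eventually_all_finset]
    intro E hE
    have hE' := hT hE
    have := hq E hE'.1
    rwa [hE'.2] at this
  obtain ⟨F, hF⟩ := h3.exists
  have hne : T.Nonempty := by
    obtain ⟨E, hE, hEp⟩ := Set.Infinite.nonempty hinf
    obtain ⟨F', hF'⟩ := (hq E hE).exists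
    rw [← Finset.card_pos, hTc]
    rw [hEp] at hF'
    by_contra h0
    simp only [not_lt, Nat.le_zero] at h0
    rw [h0] at hF'
    simp at hF'
  have h4 : ∑ E ∈ T, (slice E p.2 F).ncard ≤ Nat.card (Block p.2 F) := by
    have hdis : (T : Set (Set (Pt K))).PairwiseDisjoint
        (fun E => (slice E p.2 F).toFinite.toFinset) := by
      intro E hE E' hE' hne
      have := hd (hT hE).1 (hT hE').1 hne
      simp only [Function.onFun]
      rw [Set.Finite.disjoint_toFinset]
      exact Set.disjoint_left.2 fun x hx hx' => Set.disjoint_left.1 this hx hx'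
    have := Finset.card_biUnion hdis
    simp only [← Set.ncard_eq_toFinset_card] at this
    rw [← this, ← Set.ncard_coe_finset]
    exact Set.ncard_le_card _
  have h5 := Finset.sum_lt_sum_of_nonempty hne hF
  rw [Finset.sum_const, hTc, smul_eq_mul, ← Finset.mul_sum] at h5
  exact absurd (Nat.mul_le_mul_left ((p.2 + 1) * p.1) h4) (not_le.2 h5)

/-! ### The independent sets -/

/-- The points with `a (F ∩ S) = 0`. -/
def dset (S : Set K) : Set (Pt K) := {x | x.2.1 (tr x.1.2 S) = 0}

/-- The points with `b (F ∩ S) = true`. -/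
def aset (S : Set K) : Set (Pt K) := {x | x.2.2 (tr x.1.2 S) = true}

lemma eventually_tr_ne {S T : Set K} (h : S ≠ T) :
    ∀ᶠ F in (uf K : Filter (Finset K)), tr F S ≠ tr F T := by
  obtain ⟨k, hk⟩ : ∃ k, ¬ (k ∈ S ↔ k ∈ T) := by
    by_contra hc
    push Not at hc
    exact h (Set.ext hc)
  filter_upwards [uf_le (eventually_ge_atTop {k})] with F hF he
  have hkF : k ∈ F := hF (by simp)
  exact hk (Set.ext_iff.1 he ⟨k, hkF⟩)

lemma null_dset_inter {S T : Set K} (h : S ≠ T) : Null (dset S ∩ dset T) := by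
  classical
  intro m
  refine ⟨m, fun n hn => ?_⟩
  filter_upwards [eventually_tr_ne h] with F hF
  -- The two zeros of `a` can be overwritten by arbitrary values, independently.
  have key : (slice (dset S ∩ dset T) n F).ncard * ((n + 1) * (n + 1)) ≤ Nat.card (Block n F) := by
    let φ : (slice (dset S ∩ dset T) n F) × (Fin (n + 1) × Fin (n + 1)) → Block n F := fun y =>
      (Function.update (Function.update y.1.1.1 (tr F S) y.2.1) (tr F T) y.2.2, y.1.1.2)
    have hφ : Function.Injective φ := by
      rintro ⟨⟨⟨a, b⟩, ha⟩, c, d⟩ ⟨⟨⟨a', b'⟩, ha'⟩, c', d'⟩ he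
      simp only [φ, Prod.mk.injEq] at he
      obtain ⟨he, rfl⟩ := he
      have h1 : a (tr F S) = 0 := ha.1
      have h2 : a (tr F T) = 0 := ha.2
      have h1' : a' (tr F S) = 0 := ha'.1
      have h2' : a' (tr F T) = 0 := ha'.2
      have hd : d = d' := by simpa using congrFun he (tr F T)
      have hc : c = c' := by simpa [Function.update_of_ne hF] using congrFun he (tr F S)
      have haa : a = a' := by
        funext t
        by_cases hT : t = tr F T
        · rw [hT, h2, h2']
        by_cases hS : t = tr F S
        · rw [hS, h1, h1']
        simpa [Function.update_of_ne hT, Function.update_of_ne hS] using congrFun he t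
      subst hd hc haa
      rfl
    have := Nat.card_le_card_of_injective φ hφ
    rwa [Nat.card_prod, Nat.card_prod, Nat.card_coe_set_eq, Nat.card_fin] at this
  refine le_trans ?_ key
  rw [mul_comm]
  exact Nat.mul_le_mul_left _ (Nat.mul_le_mul_left _ (by lia))

/-- The finite Boolean combination of the sets `aset (ι j)`, `j ∈ G`, prescribed by the signs
`σ`. -/
def cube {J : Type*} (ι : J → Set K) (G : Finset J) (σ : J → Bool) : Set (Pt K) :=
  {x | ∀ j ∈ G, (x ∈ aset (ι j) ↔ σ j = true)}

lemma not_null_dset_inter {J : Type*} (ι : J → Set K) (hι : Function.Injective ι)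
    (S : Set K) (G : Finset J) (σ : J → Bool) : ¬ Null (dset S ∩ cube ι G σ) := by
  classical
  intro hN
  obtain ⟨n, hn⟩ := hN (2 * 2 ^ G.card)
  have hsep : ∀ᶠ F in (uf K : Filter (Finset K)), ∀ i ∈ G, ∀ j ∈ G, i ≠ j →
      tr F (ι i) ≠ tr F (ι j) := by
    rw [Filter.eventually_all_finset]
    intro i _
    rw [Filter.eventually_all_finset]
    intro j _
    by_cases hij : i = j
    · simp [hij]
    · exact (eventually_tr_ne (hι.ne hij)).mono fun F hF _ => hF
  obtain ⟨F, hF, hle⟩ := (hsep.and (hn n le_rfl)).exists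
  obtain ⟨τ, hτ⟩ : ∃ τ : Set F → Bool, ∀ i ∈ G, τ (tr F (ι i)) = σ i := by
    refine ⟨fun t => if h : ∃ i ∈ G, tr F (ι i) = t then σ h.choose else false, fun i hi => ?_⟩
    have h : ∃ i' ∈ G, tr F (ι i') = tr F (ι i) := ⟨i, hi, rfl⟩
    have he : h.choose = i := by
      by_contra hne
      exact hF _ h.choose_spec.1 i hi hne h.choose_spec.2
    simp only [dif_pos h, he]
  -- Overwrite the relevant values of `a` and `b` by the prescribed ones; the point is recovered
  -- from the result and the `1 + |G|` overwritten values.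
  let b' : (Set F → Bool) → Set F → Bool :=
    fun b t => if ∃ i ∈ G, tr F (ι i) = t then τ t else b t
  have hmem : ∀ y : Block n F, ((Function.update y.1 (tr F S) 0, b' y.2) : Block n F) ∈
      slice (dset S ∩ cube ι G σ) n F := by
    intro y
    refine ⟨?_, fun j hj => ?_⟩
    · change Function.update y.1 (tr F S) 0 (tr F S) = 0
      simp
    · change b' y.2 (tr F (ι j)) = true ↔ _
      have h : ∃ i ∈ G, tr F (ι i) = tr F (ι j) := ⟨j, hj, rfl⟩
      simp only [b', if_pos h, hτ j hj]
  let φ : Block n F → slice (dset S ∩ cube ι G σ) n F × (Fin (n + 1) × (G → Bool)) := fun y =>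
    (⟨_, hmem y⟩, y.1 (tr F S), fun i => y.2 (tr F (ι i)))
  have hφ : Function.Injective φ := by
    rintro ⟨a, b⟩ ⟨c, d⟩ he
    simp only [φ, Prod.mk.injEq, Subtype.mk.injEq] at he
    obtain ⟨⟨h1, h2⟩, h3, h4⟩ := he
    have hac : a = c := by
      funext t
      by_cases ht : t = tr F S
      · rw [ht, h3]
      · simpa [Function.update_of_ne ht] using congrFun h1 t
    have hbd : b = d := by
      funext t
      by_cases ht : ∃ i ∈ G, tr F (ι i) = t
      · obtain ⟨i, hi, rfl⟩ := ht
        exact congrFun h4 ⟨i, hi⟩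
      · have := congrFun h2 t
        simpa only [b', if_neg ht] using this
    rw [hac, hbd]
  have h1 := Nat.card_le_card_of_injective φ hφ
  simp only [Nat.card_prod, Nat.card_coe_set_eq, Nat.card_eq_fintype_card (α := Fin (n + 1)),
    Fintype.card_fin, Nat.card_eq_fintype_card (α := G → Bool), Fintype.card_fun,
    Fintype.card_bool, Fintype.card_coe] at h1
  have h0 : 0 < Nat.card (Block n F) := Nat.card_pos
  simp only [Nat.card_prod] at h0 hle
  nlinarith

/-! ### The topology -/

/-- The index set of the subbasis: pairs of null sets, each repeated infinitely often. -/
abbrev Idx (K : Type u) : Type u := {N : Set (Pt K) // Null N} × {N : Set (Pt K) // Null N} × ℕ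

/-- The clopen generator `(aset (ι j) \ N) ∪ M` for `j = (N, M, k)`. -/
def bset (ι : Idx K → Set K) (j : Idx K) : Set (Pt K) := (aset (ι j) \ j.1.1) ∪ j.2.1.1

open Classical in
/-- The coordinate map into the Cantor cube whose coordinate sets are the generators. -/
noncomputable def emb (ι : Idx K → Set K) (x : Pt K) : Idx K → Bool := fun j => decide (x ∈ bset ι j)

/-- The coarsest topology in which all generators are clopen. -/
noncomputable abbrev top (ι : Idx K → Set K) : TopologicalSpace (Pt K) :=
  TopologicalSpace.induced (emb ι) inferInstance

lemma isOpen_bset (ι : Idx K → Set K) (j : Idx K) : IsOpen[top ι] (bset ι j) := by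
  classical
  refine isOpen_induced_iff.2 ⟨{z | z j = true}, ?_, ?_⟩
  · exact (isOpen_discrete ({true} : Set Bool)).preimage
      (continuous_apply (A := fun _ : Idx K => Bool) j)
  · ext x; simp [emb]

/-- Every nonempty open set contains a basic one, which agrees modulo null sets with a Boolean
combination of the sets `aset (ι j)`. -/
lemma exists_cube (ι : Idx K → Set K) {U : Set (Pt K)} (hU : IsOpen[top ι] U) (hne : U.Nonempty) :
    ∃ (G : Finset (Idx K)) (σ : Idx K → Bool),
      {x | ∀ j ∈ G, (x ∈ bset ι j ↔ σ j = true)} ⊆ U := by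
  classical
  obtain ⟨W, hW, rfl⟩ := isOpen_induced_iff.1 hU
  obtain ⟨x, hx⟩ := hne
  obtain ⟨G, u, hu, hs⟩ := isOpen_pi_iff.1 hW _ hx
  refine ⟨G, emb ι x, fun y hy => hs fun j hj => ?_⟩
  have h1 : emb ι y j = emb ι x j := by
    have := hy j hj
    rw [Bool.eq_iff_iff, ← this]
    simp [emb]
  rw [h1]
  exact (hu j hj).2

lemma dset_inter_basic_nonempty (ι : Idx K → Set K) (hι : Function.Injective ι) (S : Set K)
    (G : Finset (Idx K)) (σ : Idx K → Bool) :
    (dset S ∩ {x | ∀ j ∈ G, (x ∈ bset ι j ↔ σ j = true)}).Nonempty := by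
  by_contra hemp
  refine not_null_dset_inter ι hι S G σ
    ((null_biUnion G (fun j => j.1.1 ∪ j.2.1.1) fun j _ => j.1.2.union j.2.1.2).mono ?_)
  rintro x ⟨hxS, hx⟩
  by_contra hn
  simp only [Set.mem_iUnion, not_exists, Set.mem_union, not_or] at hn
  refine hemp ⟨x, hxS, fun j hj => ?_⟩
  have := hn j hj
  rw [← hx j hj]
  simp [bset, this.1, this.2]

lemma dense_dset (ι : Idx K → Set K) (hι : Function.Injective ι) (S : Set K) :
    @Dense _ (top ι) (dset S) := by
  let := top ι
  rw [dense_iff_inter_open]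
  intro U hU hne
  obtain ⟨G, σ, hG⟩ := exists_cube ι hU hne
  obtain ⟨x, hx, hx'⟩ := dset_inter_basic_nonempty ι hι S G σ
  exact ⟨x, hG hx', hx⟩

lemma Null.isNowhereDense (ι : Idx K → Set K) (hι : Function.Injective ι) {N : Set (Pt K)}
    (hN : Null N) : @IsNowhereDense _ (top ι) N := by
  classical
  let := top ι
  rw [IsNowhereDense, Set.eq_empty_iff_forall_notMem]
  intro x hx
  obtain ⟨G, σ, hG⟩ := exists_cube ι isOpen_interior ⟨x, hx⟩
  -- An unused generator `aset (ι j) \ N`.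
  obtain ⟨k, hk⟩ : ∃ k : ℕ, ((⟨N, hN⟩, ⟨∅, null_empty⟩, k) : Idx K) ∉ G := by
    obtain ⟨k, hk⟩ := Infinite.exists_notMem_finset (G.image fun j => j.2.2)
    exact ⟨k, fun h => hk (Finset.mem_image.2 ⟨_, h, rfl⟩)⟩
  set j₀ : Idx K := (⟨N, hN⟩, ⟨∅, null_empty⟩, k) with hj₀
  obtain ⟨y, -, hy⟩ := dset_inter_basic_nonempty ι hι ∅ (insert j₀ G) (Function.update σ j₀ true)
  have hy1 : y ∈ bset ι j₀ := (hy j₀ (by simp)).2 (by simp)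
  have hy2 : y ∈ closure N := interior_subset (hG fun j hj => by
    have hne : j ≠ j₀ := fun h => hk (h ▸ hj)
    rw [hy j (by simp [hj]), Function.update_of_ne hne])
  obtain ⟨z, hz, hzN⟩ := mem_closure_iff.1 hy2 _ (isOpen_bset ι j₀) hy1
  simp [bset, hj₀, hzN] at hz

lemma not_null_of_isOpen (ι : Idx K → Set K) (hι : Function.Injective ι) {U : Set (Pt K)}
    (hU : IsOpen[top ι] U) (hne : U.Nonempty) : ¬ Null U := by
  let := top ι
  intro hN
  have h := hN.isNowhereDense ι hι
  have h2 : U ⊆ interior (closure U) := interior_maximal subset_closure hU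
  rw [h] at h2
  exact hne.ne_empty (Set.subset_empty_iff.1 h2)

instance : Nonempty (Pt K) := ⟨⟨(0, ∅), fun _ => 0, fun _ => true⟩⟩

lemma not_null_of_dense (ι : Idx K → Set K) (hι : Function.Injective ι) {E : Set (Pt K)}
    (hE : @Dense _ (top ι) E) : ¬ Null E := by
  let := top ι
  intro hN
  have h := hN.isNowhereDense ι hι
  rw [IsNowhereDense, hE.closure_eq, interior_univ] at h
  exact Set.univ_nonempty.ne_empty h

lemma emb_injective [Infinite K] (ι : Idx K → Set K) : Function.Injective (emb ι) := by
  classical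
  intro x y h
  by_contra hne
  -- The generator with `N = {y}` and `M = {x}` contains `x` but not `y`.
  have := congrFun h (⟨{y}, null_singleton y⟩, ⟨{x}, null_singleton x⟩, 0)
  rw [emb, emb, decide_eq_decide] at this
  have h2 := this.1 (Or.inr rfl)
  rcases h2 with h2 | h2
  · exact h2.2 rfl
  · exact hne (Eq.symm h2)

lemma isTopologicalBasis_isClopen' (ι : Idx K → Set K) :
    @TopologicalSpace.IsTopologicalBasis _ (top ι) {s : Set (Pt K) | @IsClopen _ (top ι) s} := by
  let := top ι
  have hcont : Continuous (emb ι) := continuous_induced_dom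
  refine TopologicalSpace.isTopologicalBasis_of_isOpen_of_nhds (fun u hu => hu.2) ?_
  intro x U hx hU
  obtain ⟨W, hW, rfl⟩ := isOpen_induced_iff.1 hU
  obtain ⟨V, hV, hxV, hVW⟩ :=
    (isTopologicalBasis_isClopen (X := Idx K → Bool)).exists_subset_of_mem_open hx hW
  exact ⟨emb ι ⁻¹' V, IsClopen.preimage hV hcont, hxV, Set.preimage_mono hVW⟩

lemma mk_pt [Infinite K] : #(Pt K) = #K := by
  have hK : ℵ₀ ≤ #K := Cardinal.aleph0_le_mk K
  have hP : #(ℕ × Finset K) = #K := by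
    rw [Cardinal.mk_prod, Cardinal.mk_finset_of_infinite]
    simp [Cardinal.aleph0_mul_eq hK]
  apply le_antisymm
  · rw [Cardinal.mk_sigma]
    calc _ ≤ Cardinal.sum (fun _ : ℕ × Finset K => (ℵ₀ : Cardinal.{u})) :=
          Cardinal.sum_le_sum _ _ fun p => (Cardinal.lt_aleph0_of_finite _).le
      _ = #K := by
        rw [Cardinal.sum_const', hP, Cardinal.mul_aleph0_eq hK]
  · rw [← hP]
    exact Cardinal.mk_le_of_injective
      (f := fun p : ℕ × Finset K => (⟨p, fun _ => 0, fun _ => true⟩ : Pt K))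
      fun p q h => congrArg Sigma.fst h

lemma exists_index [Infinite K] : ∃ ι : Idx K → Set K, Function.Injective ι := by
  have hK : ℵ₀ ≤ #K := Cardinal.aleph0_le_mk K
  have h2 : ℵ₀ ≤ (2 : Cardinal.{u}) ^ #K := hK.trans (Cardinal.cantor _).le
  have hN : #{N : Set (Pt K) // Null N} ≤ 2 ^ #K := by
    rw [← mk_pt (K := K), ← Cardinal.mk_set]
    exact Cardinal.mk_subtype_le _
  have : #(Idx K) ≤ #(Set K) := by
    rw [Cardinal.mk_set, Cardinal.mk_prod, Cardinal.mk_prod]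
    simp only [Cardinal.lift_id, Cardinal.lift_uzero, Cardinal.mk_nat, Cardinal.lift_aleph0]
    exact Cardinal.mul_le_of_le h2 hN (Cardinal.mul_le_of_le h2 hN h2)
  obtain ⟨f⟩ := Cardinal.le_def _ _ |>.1 this
  exact ⟨f, f.injective⟩

end ResolvabilityExample

open ResolvabilityExample in
/-- For every infinite cardinal `κ` there is a zero-dimensional Hausdorff space with
`|X| = Δ(X) = κ` that is almost `2^κ`-resolvable (hence extraresolvable) but not
`ω₁`-resolvable. -/
theorem stmt1 (κ : Cardinal.{u}) (hκ : ℵ₀ ≤ κ) :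
    ∃ (X : Type u) (_ : TopologicalSpace X),
      TopologicalSpace.IsTopologicalBasis {s : Set X | IsClopen s} ∧
      T2Space X ∧
      #X = κ ∧
      dispersion X = κ ∧
      IsAlmostResolvable X (2 ^ κ) ∧
      IsExtraresolvable X ∧
      ¬ IsResolvable X (aleph 1) := by
  induction κ using Cardinal.inductionOn with
  | _ K
  have : Infinite K := Cardinal.aleph0_le_mk_iff.1 hκ
  obtain ⟨ι, hι⟩ := exists_index (K := K)
  let := top ι
  have hdisp : dispersion (Pt K) = #K := by
    have : {c : Cardinal.{u} | ∃ G : Set (Pt K), IsOpen G ∧ G.Nonempty ∧ #G = c} = {#K} := by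
      ext c
      constructor
      · rintro ⟨G, hG, hne, rfl⟩
        exact le_antisymm ((Cardinal.mk_set_le G).trans mk_pt.le)
          (card_le_of_not_null (not_null_of_isOpen ι hι hG hne))
      · rintro rfl
        exact ⟨Set.univ, isOpen_univ, Set.univ_nonempty, by rw [Cardinal.mk_univ, mk_pt]⟩
    rw [dispersion, this, csInf_singleton]
  have hinj : Function.Injective (dset (K := K)) := by
    intro S T h
    by_contra hne
    have := null_dset_inter hne
    rw [← h, Set.inter_self] at this
    exact not_null_of_dense ι hι (dense_dset ι hι S) this
  have halm : IsAlmostResolvable (Pt K) (2 ^ #K) := by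
    refine ⟨Set.range dset, ?_, ?_, ?_⟩
    · rw [Cardinal.mk_range_eq _ hinj, Cardinal.mk_set]
    · rintro _ ⟨S, rfl⟩
      exact dense_dset ι hι S
    · rintro _ ⟨S, rfl⟩ _ ⟨T, rfl⟩ hne
      exact (null_dset_inter fun h => hne (by rw [h])).isNowhereDense ι hι
  refine ⟨Pt K, top ι, isTopologicalBasis_isClopen' ι, ?_, mk_pt, hdisp, halm, ?_, ?_⟩
  · exact T2Space.of_injective_continuous (emb_injective ι) continuous_induced_dom
  · obtain ⟨𝒟, hc, hd, ha⟩ := halm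
    have hle : Order.succ (dispersion (Pt K)) ≤ #𝒟 := by
      rw [hc, hdisp]
      exact Order.succ_le_of_lt (Cardinal.cantor _)
    obtain ⟨𝒟', hs, hc'⟩ := Cardinal.le_mk_iff_exists_subset.1 hle
    exact ⟨𝒟', hc', fun D hD => hd D (hs hD), fun D hD E hE => ha D (hs hD) E (hs hE)⟩
  · rintro ⟨𝒟, hc, hd, hdis⟩
    have := countable_of_disjoint 𝒟 hdis fun E hE => not_null_of_dense ι hι (hd E hE)
    have h1 := Cardinal.le_aleph0_iff_set_countable.2 this
    rw [hc] at h1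
    exact absurd h1 (not_le.2 Cardinal.aleph0_lt_aleph_one)
end

section
/- For every infinite cardinal κ there exists a subset X of the Cantor cube {0,1}^(2^κ) (with the product topology) such that X is κ-dense in the cube (in particular |X| = κ and, with the subspace topology, Δ(X) = κ), and the subspace X is almost 2^κ-resolvable but not ω₁-resolvable. -/
/-!
The space is a set `S` of size `κ`, given a topology by `2 ^ κ` two-valued coordinates in which all
its dense sets are under control; this is a variant of the method of `𝒟`-forced spaces.

The starting point is an independent family of `2 ^ κ` functions `S → Bool` in which every finite
pattern is attained `κ` times (`exists_independent`). Some of the functions become sets `D f`, the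
others become coordinates. For `f ≠ g` there are coordinates `pair f g n`, `n ∈ ℕ`, made to vanish
on `D f ∩ D g`, so that this intersection is nowhere dense. Apart from this constraint everything
stays independent: a finite condition `p` on coordinates `d` that does not give the value `true` to
some `pair f g n` with `f, g ∈ F` is called compatible with `F`, and then its cell, the set of
points of `⋂ f ∈ F, D f` satisfying it, has size `κ`. Compatible triples `(F, d, p)` satisfy the
countable chain condition (`exists_compat_union`), because they can be coded by finite partial
functions to `Bool`.

To control dense sets, a well-order of all subsets `T` of `S` is run through. If `T` still meets
all compatible cells in `κ` points, then the coordinates `force T n`, `n ∈ ℕ`, are changed to `true`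
outside `T`. This gives `T` nonempty interior and keeps the cells large (`cell_large`), as the change
is not seen inside `T`. Infinitely many coordinates per `T` are used so that earlier cells contain
final ones, whence every `T` meeting all final cells in `κ` points was treated
(`selected_of_large`). Applied to complements, this says that every dense set contains a compatible
cell up to fewer than `κ` points (`exists_cell_of_dense`).

The sets `D f` are then dense with pairwise nowhere dense intersections, which gives almost
`2 ^ κ`-resolvability. Among uncountably many dense sets, two contain, up to fewer than `κ` points,
cells whose triples have a common compatible extension; the cell of the extension has size `κ`, so
the two dense sets meet. Hence the space is not `ω₁`-resolvable.
-/

open Cardinal Set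

universe u

/-! ### Two facts about finite partial functions -/

/-- Finite partial functions to `Bool` satisfy the countable chain condition: the basic clopen
sets they determine in the Cantor cube have positive measure for the product measure. -/
lemma exists_compatible {J : Type*} {ι : Type*} [Uncountable ι] (d : ι → Finset J)
    (p : ι → J → Bool) :
    ∃ a b, a ≠ b ∧ ∀ j, j ∈ d a → j ∈ d b → p a j = p b j := by
  classical
  by_contra! hcon
  let ν : MeasureTheory.Measure Bool := (PMF.uniformOfFintype Bool).toMeasure
  let μ := MeasureTheory.Measure.infinitePi (fun _ : J => ν)
  let B : ι → Set (J → Bool) := fun a => (d a : Set J).pi fun j => {p a j}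
  have hpos : ∀ a, 0 < μ (B a) := by
    intro a
    have h : μ (B a) = ∏ j ∈ d a, ν {p a j} :=
      MeasureTheory.Measure.infinitePi_pi _ (fun j _ => measurableSet_singleton _)
    rw [h, pos_iff_ne_zero, Finset.prod_ne_zero_iff]
    intro j _
    simp [ν]
  have hc : Set.Countable {a | 0 < μ (B a)} := by
    apply MeasureTheory.Measure.countable_meas_pos_of_disjoint_iUnion
    · intro a
      exact MeasurableSet.pi (d a).countable_toSet fun j _ => measurableSet_singleton _
    · intro a b hab
      rw [Function.onFun, Set.disjoint_left]
      intro y hya hyb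
      obtain ⟨j, hja, hjb, hne⟩ := hcon a b hab
      have h1 : y j = p a j := hya j hja
      have h2 : y j = p b j := hyb j hjb
      exact hne (h1.symm.trans h2)
  have : {a | 0 < μ (B a)} = Set.univ := Set.eq_univ_of_forall hpos
  rw [this, Set.countable_univ_iff] at hc
  exact not_countable hc

/-- There are `2 ^ |S|` functions `S → Bool` that are independent: every finite pattern of values
is attained at `|S|` many points. The points are coded by pairs of a finite set `A` and a finite
family of finite sets; a subset `B` takes the value `true` there if `B ∩ A` lies in the family. -/
lemma exists_independent_s2 (S J : Type u) [Infinite S] (hJ : #J = #(Set S)) :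
    ∃ e : J → S → Bool, ∀ (d : Finset J) (p : J → Bool),
      #S ≤ #{s | ∀ j ∈ d, e j s = p j} := by
  classical
  obtain ⟨σ⟩ := Cardinal.eq.1 hJ
  have hQ : #S = #(S × Finset S × Finset (Finset S)) := by
    simp [mk_finset_of_infinite]
  obtain ⟨q⟩ := Cardinal.eq.1 hQ
  refine ⟨fun j s => decide ((q s).2.1.filter (· ∈ σ j) ∈ (q s).2.2), fun d p => ?_⟩
  have hw : ∀ j k : J, ∃ w : S, j ≠ k → ¬ (w ∈ σ j ↔ w ∈ σ k) := by
    intro j k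
    by_contra! h
    have hjk := (h (Classical.arbitrary S)).1
    exact hjk (σ.injective (Set.ext fun w => (h w).2))
  choose w hw using hw
  let A : Finset S := (d ×ˢ d).image fun x => w x.1 x.2
  let 𝒜 : Finset (Finset S) := (d.filter fun j => p j = true).image fun j => A.filter (· ∈ σ j)
  have htr : ∀ j ∈ d, ∀ k ∈ d, A.filter (· ∈ σ j) = A.filter (· ∈ σ k) → j = k := by
    intro j hj k hk h
    by_contra hne
    apply hw j k hne
    have hA : w j k ∈ A := Finset.mem_image.2 ⟨(j, k), by simp [hj, hk], rfl⟩
    have := Finset.ext_iff.1 h (w j k)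
    simpa [hA] using this
  refine mk_le_of_injective (f := fun t => ⟨q.symm (t, A, 𝒜), fun j hj => ?_⟩) ?_
  · simp only [Equiv.apply_symm_apply]
    rw [Bool.eq_iff_iff, decide_eq_true_iff]
    constructor
    · intro h
      obtain ⟨k, hk, hkj⟩ := Finset.mem_image.1 h
      rw [Finset.mem_filter] at hk
      rw [← htr k hk.1 j hj hkj]
      exact hk.2
    · intro h
      exact Finset.mem_image.2 ⟨j, by simp [hj, h], rfl⟩
  · intro t t' h
    simpa using h

/-! ### Coordinates and cells -/

/-- Names for the coordinates of the cube. `force T n` is used to make the set `T` have nonempty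
interior, `pair f g n` to make the dense sets named `f` and `g` have nowhere dense intersection,
and `sep x y` to separate the points `x` and `y`. -/
inductive Idx (S : Type u) : Type u
  | force (T : Set S) (n : ℕ)
  | pair (f g : Set S) (n : ℕ)
  | sep (x y : S)

lemma mk_idx (S : Type u) [Infinite S] : #(Idx S) = #(Set S) := by
  have hS : ℵ₀ ≤ #(Set S) := aleph0_le_mk _
  apply le_antisymm
  · let φ : Idx S → (Set S × ULift.{u} ℕ) ⊕ (Set S × Set S × ULift.{u} ℕ) ⊕ (Set S × Set S)
      | .force T n => .inl (T, ⟨n⟩)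
      | .pair f g n => .inr (.inl (f, g, ⟨n⟩))
      | .sep x y => .inr (.inr ({x}, {y}))
    have hφ : Function.Injective φ := by
      intro a b h
      cases a <;> cases b <;> simp_all [φ]
    refine (mk_le_of_injective hφ).trans ?_
    have h1 : #(Set S) * #(Set S) = #(Set S) := mul_eq_self hS
    have h2 : #(Set S) * ℵ₀ = #(Set S) := mul_aleph0_eq hS
    have h3 : #(Set S) + #(Set S) = #(Set S) := add_eq_self hS
    rw [mk_sum, mk_sum, mk_prod, mk_prod, mk_prod, mk_prod, mk_uLift]
    simp only [Cardinal.lift_id, mk_nat, Cardinal.lift_aleph0]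
    rw [h2, h1, h3, h3]
  · exact mk_le_of_injective (f := fun T => Idx.force T 0) fun a b h => by simpa using h

open Classical in
/-- The coordinates before any set is forced to have nonempty interior, built from an independent
family `e`. The value `e (Sum.inr f) s` says whether `s` belongs to the dense set named `f`; the
coordinates `pair f g n` vanish on the intersection of the dense sets named `f` and `g`. -/
noncomputable def rawCoord {S : Type u} (e : Idx S ⊕ Set S → S → Bool) : Idx S → S → Bool
  | .force T n, s => e (.inl (.force T n)) s
  | .pair f g n, s => e (.inl (.pair f g n)) s &&
      !(decide (f ≠ g) && (e (.inr f) s && e (.inr g) s))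
  | .sep x y, s => if s = x then true else if s = y then false else e (.inl (.sep x y)) s

open Classical in
/-- The coordinates after the sets `T` satisfying `G` have been forced: for such `T`, the
coordinates `force T n` are changed to `true` outside `T`, so that `false` is only attained
inside `T`. -/
noncomputable def coord {S : Type u} (e : Idx S ⊕ Set S → S → Bool) (G : Set S → Prop) :
    Idx S → S → Bool
  | .force T n, s => rawCoord e (.force T n) s || decide (G T ∧ s ∉ T)
  | .pair f g n, s => rawCoord e (.pair f g n) s
  | .sep x y, s => rawCoord e (.sep x y) s

/-- The finite condition `p` on `d` does not prevent the dense sets with names in `F` from having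
a common point. -/
def Compat {S : Type u} (F : Finset (Set S)) (d : Finset (Idx S)) (p : Idx S → Bool) : Prop :=
  ∀ f g n, .pair f g n ∈ d → p (.pair f g n) = true → f ≠ g → f ∈ F → g ∉ F

/-- The points of the dense sets with names in `F` that satisfy the finite condition `p` on `d`. -/
def cell {S : Type u} (e : Idx S ⊕ Set S → S → Bool) (G : Set S → Prop)
    (F : Finset (Set S)) (d : Finset (Idx S)) (p : Idx S → Bool) : Set S :=
  {s | (∀ f ∈ F, e (.inr f) s = true) ∧ ∀ i ∈ d, coord e G i s = p i}

open Classical in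
/-- The names of dense sets mentioned by a coordinate. -/
noncomputable def Idx.names {S : Type u} : Idx S → Finset (Set S)
  | .pair f g _ => {f, g}
  | _ => ∅

open Classical in
/-- The points mentioned by a coordinate. -/
noncomputable def Idx.points {S : Type u} : Idx S → Finset S
  | .sep x y => {x, y}
  | _ => ∅

open Classical in
/-- The domain of the finite partial function, on the index set of the independent family, that
codes the triple `(F, d, p)`. -/
noncomputable def codeDom {S : Type u} (F : Finset (Set S)) (d : Finset (Idx S)) :
    Finset (Idx S ⊕ Set S) :=
  d.image Sum.inl ∪ (F ∪ d.biUnion Idx.names).image Sum.inr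

open Classical in
/-- The values of the finite partial function coding `(F, d, p)`. -/
noncomputable def codeVal {S : Type u} (F : Finset (Set S)) (p : Idx S → Bool) :
    Idx S ⊕ Set S → Bool :=
  Sum.elim p fun f => decide (f ∈ F)

lemma inl_mem_codeDom {S : Type u} {F : Finset (Set S)} {d : Finset (Idx S)} {i : Idx S} :
    Sum.inl i ∈ codeDom F d ↔ i ∈ d := by
  simp [codeDom]

lemma inr_mem_codeDom {S : Type u} {F : Finset (Set S)} {d : Finset (Idx S)} {f : Set S} :
    Sum.inr f ∈ codeDom F d ↔ f ∈ F ∨ ∃ i ∈ d, f ∈ i.names := by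
  simp [codeDom]

/-- Compatible triples satisfy the countable chain condition. -/
lemma exists_compat_union {S : Type u} {ι : Type*} [Uncountable ι] (F : ι → Finset (Set S))
    (d : ι → Finset (Idx S)) (p : ι → Idx S → Bool) (h : ∀ a, Compat (F a) (d a) (p a)) :
    ∃ a b, a ≠ b ∧ ∃ F' d' p', Compat F' d' p' ∧ F a ⊆ F' ∧ F b ⊆ F' ∧ d a ⊆ d' ∧ d b ⊆ d' ∧
      (∀ i ∈ d a, p' i = p a i) ∧ (∀ i ∈ d b, p' i = p b i) := by
  classical
  obtain ⟨a, b, hab, hc⟩ := exists_compatible (fun a => codeDom (F a) (d a))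
    (fun a => codeVal (F a) (p a))
  have hp : ∀ i ∈ d a, i ∈ d b → p a i = p b i := fun i ha hb => by
    simpa [codeVal] using hc (.inl i) (inl_mem_codeDom.2 ha) (inl_mem_codeDom.2 hb)
  have hF : ∀ f, (f ∈ F a ∨ ∃ i ∈ d a, f ∈ i.names) → (f ∈ F b ∨ ∃ i ∈ d b, f ∈ i.names) →
      (f ∈ F a ↔ f ∈ F b) := fun f ha hb => by
    simpa [codeVal] using hc (.inr f) (inr_mem_codeDom.2 ha) (inr_mem_codeDom.2 hb)
  refine ⟨a, b, hab, F a ∪ F b, d a ∪ d b, fun i => if i ∈ d a then p a i else p b i, ?_,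
    Finset.subset_union_left, Finset.subset_union_right, Finset.subset_union_left,
    Finset.subset_union_right, fun i hi => by simp [hi], fun i hi => ?_⟩
  · intro f g n hmem hval hne hf hg
    rw [Finset.mem_union] at hf hg hmem
    have hfn : f ∈ (Idx.pair f g n).names := by simp [Idx.names]
    have hgn : g ∈ (Idx.pair f g n).names := by simp [Idx.names]
    by_cases hda : Idx.pair f g n ∈ d a
    · simp only [hda, if_true] at hval
      have key : ∀ k ∈ (Idx.pair f g n).names, k ∈ F a ∨ k ∈ F b → k ∈ F a := by
        rintro k hk (h1 | h1)
        · exact h1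
        · exact (hF k (.inr ⟨_, hda, hk⟩) (.inl h1)).2 h1
      exact h a f g n hda hval hne (key f hfn hf) (key g hgn hg)
    · have hdb := hmem.resolve_left hda
      simp only [hda, if_false] at hval
      have key : ∀ k ∈ (Idx.pair f g n).names, k ∈ F a ∨ k ∈ F b → k ∈ F b := by
        rintro k hk (h1 | h1)
        · exact (hF k (.inl h1) (.inr ⟨_, hdb, hk⟩)).1 h1
        · exact h1
      exact h b f g n hdb hval hne (key f hfn hf) (key g hgn hg)
  · by_cases hda : i ∈ d a
    · simp [hda, hp i hda hi]
    · simp [hda]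

/-- The property of an independent family: finite patterns are attained `|S|` many times. -/
def Indep {S : Type u} (e : Idx S ⊕ Set S → S → Bool) : Prop :=
  ∀ (d : Finset (Idx S ⊕ Set S)) (p : Idx S ⊕ Set S → Bool), #S ≤ #{s | ∀ j ∈ d, e j s = p j}

/-- Before forcing, all cells given by compatible triples are large. -/
lemma raw_cell_large {S : Type u} [Infinite S] {e : Idx S ⊕ Set S → S → Bool} (he : Indep e)
    {F : Finset (Set S)} {d : Finset (Idx S)} {p : Idx S → Bool} (h : Compat F d p) :
    #S ≤ #(cell e (fun _ => False) F d p) := by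
  classical
  let B : Set S := {s | ∀ j ∈ codeDom F d, e j s = codeVal F p j}
  let P : Finset S := d.biUnion Idx.points
  have hsub : B \ P ⊆ cell e (fun _ => False) F d p := by
    rintro s ⟨hs, hsP⟩
    have hF : ∀ f, (f ∈ F ∨ ∃ i ∈ d, f ∈ i.names) → (e (.inr f) s = true ↔ f ∈ F) := by
      intro f hf
      simp [hs _ (inr_mem_codeDom.2 hf), codeVal]
    have hi : ∀ i ∈ d, e (.inl i) s = p i := fun i hi => hs _ (inl_mem_codeDom.2 hi)
    refine ⟨fun f hf => (hF f (.inl hf)).2 hf, fun i hid => ?_⟩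
    cases i with
    | force T n => simp [coord, rawCoord, hi _ hid]
    | sep x y =>
      have : s ∉ (Idx.sep x y).points := fun hm =>
        hsP (Finset.mem_coe.2 (Finset.mem_biUnion.2 ⟨_, hid, hm⟩))
      simp only [Idx.points, Finset.mem_insert, Finset.mem_singleton, not_or] at this
      simp [coord, rawCoord, hi _ hid, this.1, this.2]
    | pair f g n =>
      have hf := hF f (.inr ⟨_, hid, by simp [Idx.names]⟩)
      have hg := hF g (.inr ⟨_, hid, by simp [Idx.names]⟩)
      simp only [coord, rawCoord, hi _ hid]
      cases hp : p (.pair f g n) with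
      | false => simp
      | true =>
        have := h f g n hid hp
        simp only [ne_eq, decide_not, Bool.true_and, Bool.not_eq_true', Bool.and_eq_false_iff,
          Bool.not_eq_false', decide_eq_true_eq]
        rw [← Bool.not_eq_true, ← Bool.not_eq_true, hf, hg]
        tauto
  have hB : #S ≤ #B := he _ _
  have hinf : ℵ₀ ≤ #S := aleph0_le_mk S
  by_contra! hlt
  have h1 : #(B \ P : Set S) < #S := (mk_le_mk_of_subset hsub).trans_lt hlt
  have h2 : #(P : Set S) < #S := by
    refine lt_of_lt_of_le ?_ hinf
    simp
  have h3 : #B ≤ #(B \ P : Set S) + #(P : Set S) := by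
    refine (mk_le_mk_of_subset ?_).trans (mk_union_le _ _)
    intro s hs
    by_cases hsP : s ∈ (P : Set S)
    · exact .inr hsP
    · exact .inl ⟨hs, hsP⟩
  exact absurd (hB.trans h3) (not_le.2 (add_lt_of_lt hinf h1 h2))

/-! ### The forcing recursion -/

/-- `G` selects the sets that are forced: running through all subsets of `S` along a well-order,
`T` is selected exactly when it meets every compatible cell, formed with the coordinates changed
before `T`, in `|S|` many points. -/
def IsSelection {S : Type u} (e : Idx S ⊕ Set S → S → Bool) (G : Set S → Prop) : Prop :=
  ∀ T, G T ↔ ∀ F d p, Compat F d p →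
    #S ≤ #(T ∩ cell e (fun T' => WellOrderingRel T' T ∧ G T') F d p : Set S)

lemma exists_isSelection {S : Type u} (e : Idx S ⊕ Set S → S → Bool) :
    ∃ G, IsSelection e G := by
  have wf : WellFounded (WellOrderingRel (α := Set S)) := IsWellFounded.wf
  refine ⟨wf.fix fun T ih => ∀ F d p, Compat F d p →
    #S ≤ #(T ∩ cell e (fun T' => ∃ h : WellOrderingRel T' T, ih T' h) F d p : Set S), fun T => ?_⟩
  rw [wf.fix_eq]
  simp only [exists_prop]

lemma exists_last {α : Type*} {M : Set α} (hfin : M.Finite) (hM : M.Nonempty) :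
    ∃ a ∈ M, ∀ b ∈ M, b = a ∨ WellOrderingRel b a := by
  classical
  let _ : LinearOrder α := linearOrderOfSTO WellOrderingRel
  obtain ⟨a, ha, hmax⟩ := Set.exists_max_image M id hfin hM
  exact ⟨a, ha, fun b hb => (hmax b hb).eq_or_lt⟩

/-- Forcing the selected sets keeps every compatible cell large. Among the selected sets mentioned
by a condition, the latest one, `T`, decides: inside `T` the change made for `T` is invisible. -/
lemma cell_large {S : Type u} [Infinite S] {e : Idx S ⊕ Set S → S → Bool} (he : Indep e)
    {G : Set S → Prop} (hG : IsSelection e G)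
    {F : Finset (Set S)} {d : Finset (Idx S)} {p : Idx S → Bool} (h : Compat F d p) :
    #S ≤ #(cell e G F d p) := by
  classical
  by_cases hM : ∃ T, G T ∧ ∃ n, Idx.force T n ∈ d
  · obtain ⟨T, ⟨hT, -⟩, hmax⟩ : ∃ T, (G T ∧ ∃ n, Idx.force T n ∈ d) ∧
        ∀ T', (G T' ∧ ∃ n, Idx.force T' n ∈ d) → T' = T ∨ WellOrderingRel T' T := by
      have hfin : {T | G T ∧ ∃ n, Idx.force T n ∈ d}.Finite := by
        refine (d.finite_toSet.image fun i => match i with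
          | .force T _ => T
          | _ => ∅).subset ?_
        rintro T ⟨-, n, hn⟩
        exact ⟨_, hn, rfl⟩
      exact exists_last hfin hM
    refine ((hG T).1 hT F d p h).trans (mk_le_mk_of_subset ?_)
    rintro s ⟨hsT, hsF, hsd⟩
    refine ⟨hsF, fun i hi => ?_⟩
    rw [← hsd i hi]
    cases i with
    | force T' n =>
      simp only [coord]
      congr 2
      rw [eq_iff_iff]
      refine ⟨fun ⟨h1, h2⟩ => ?_, fun ⟨h1, h2⟩ => ⟨h1.2, h2⟩⟩
      rcases hmax T' ⟨h1, n, hi⟩ with h3 | h3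
      · exact absurd (h3 ▸ hsT) h2
      · exact ⟨⟨h3, h1⟩, h2⟩
    | pair f g n => rfl
    | sep x y => rfl
  · refine (raw_cell_large he h).trans (mk_le_mk_of_subset ?_)
    rintro s ⟨hsF, hsd⟩
    refine ⟨hsF, fun i hi => ?_⟩
    rw [← hsd i hi]
    cases i with
    | force T n =>
      have : ¬ G T := fun hT => hM ⟨T, hT, n, hi⟩
      simp [coord, this]
    | pair f g n => rfl
    | sep x y => rfl

/-- Every set meeting all final compatible cells in `|S|` many points was selected. The cells used
in the selection contain final ones: if a selected `T'` is mentioned by the condition, then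
requiring `false` at a further coordinate `force T' n` confines the cell to `T'`, where the change
made for `T'` is invisible. -/
lemma selected_of_large {S : Type u} {e : Idx S ⊕ Set S → S → Bool}
    {G : Set S → Prop} (hG : IsSelection e G) {T : Set S}
    (hT : ∀ F d p, Compat F d p → #S ≤ #(T ∩ cell e G F d p : Set S)) : G T := by
  classical
  rw [hG T]
  intro F d p h
  -- `N` is fresh: no coordinate `force T' N` occurs in `d`.
  obtain ⟨N, hN⟩ : ∃ N : ℕ, ∀ T', Idx.force T' N ∉ d := by
    let ν : Idx S → ℕ := fun i => match i with
      | .force _ n => n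
      | _ => 0
    obtain ⟨N, hN⟩ := Infinite.exists_notMem_finset (d.image ν)
    exact ⟨N, fun T' hm => hN (Finset.mem_image.2 ⟨_, hm, rfl⟩)⟩
  let fresh : Idx S → Finset (Idx S) := fun i => match i with
    | .force T' _ => if G T' then {.force T' N} else ∅
    | _ => ∅
  have hfresh : ∀ j ∈ d.biUnion fresh, ∃ T', j = .force T' N := by
    intro j hj
    obtain ⟨i, -, hi⟩ := Finset.mem_biUnion.1 hj
    cases i with
    | force T' n =>
      simp only [fresh] at hi
      split_ifs at hi
      · exact ⟨T', Finset.mem_singleton.1 hi⟩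
      · simp at hi
    | pair f g n => simp [fresh] at hi
    | sep x y => simp [fresh] at hi
  let d' : Finset (Idx S) := d ∪ d.biUnion fresh
  let p' : Idx S → Bool := fun i => if i ∈ d then p i else false
  have h' : Compat F d' p' := by
    intro f g n hm hv
    rcases Finset.mem_union.1 hm with hm | hm
    · simp only [p', hm, if_true] at hv
      exact h f g n hm hv
    · obtain ⟨T', hT'⟩ := hfresh _ hm
      cases hT'
  refine (hT F d' p' h').trans (mk_le_mk_of_subset ?_)
  rintro s ⟨hsT, hsF, hsd⟩
  refine ⟨hsT, hsF, fun i hi => ?_⟩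
  have hval : coord e G i s = p i := by
    simpa [p', hi] using hsd i (Finset.mem_union_left _ hi)
  rw [← hval]
  cases i with
  | force T' n =>
    simp only [coord]
    congr 2
    rw [eq_iff_iff]
    refine ⟨fun ⟨h1, h2⟩ => ⟨h1.2, h2⟩, fun ⟨h1, h2⟩ => absurd ?_ h2⟩
    have hmem : Idx.force T' N ∈ d' :=
      Finset.mem_union_right _ (Finset.mem_biUnion.2 ⟨_, hi, by simp [fresh, h1]⟩)
    have := hsd _ hmem
    simp only [p', hN T', if_false, coord, Bool.or_eq_false_iff, decide_eq_false_iff_not] at this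
    by_contra hn
    exact this.2 ⟨h1, hn⟩
  | pair f g n => rfl
  | sep x y => rfl

/-- Full control over the dense sets: a set `E` meeting every nonempty basic open set contains a
compatible cell up to fewer than `|S|` points. Otherwise the complement of `E` would have been
forced to have nonempty interior. -/
lemma exists_cell_of_dense {S : Type u} {e : Idx S ⊕ Set S → S → Bool}
    {G : Set S → Prop} (hG : IsSelection e G) {E : Set S}
    (hE : ∀ (d : Finset (Idx S)) (p : Idx S → Bool), ∃ s ∈ E, ∀ i ∈ d, coord e G i s = p i) :
    ∃ F d p, Compat F d p ∧ #(Eᶜ ∩ cell e G F d p : Set S) < #S := by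
  by_contra! hcon
  have hsel : G Eᶜ := selected_of_large hG hcon
  obtain ⟨s, hs, hsd⟩ := hE {Idx.force Eᶜ 0} fun _ => false
  have := hsd _ (Finset.mem_singleton_self _)
  simp [coord, hsel, hs] at this


/-! ### The subspace of the cube -/

/-- A point of `S` as a point of the cube, the coordinates being renamed along `σ`. -/
noncomputable def toCube {S C : Type u} (σ : C ≃ Idx S) (e : Idx S ⊕ Set S → S → Bool)
    (G : Set S → Prop) (s : S) : C → Bool :=
  fun c => coord e G (σ c) s

lemma toCube_injective {S C : Type u} (σ : C ≃ Idx S) (e : Idx S ⊕ Set S → S → Bool)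
    (G : Set S → Prop) : Function.Injective (toCube σ e G) := by
  intro x y h
  by_contra hne
  have := congrFun h (σ.symm (.sep x y))
  simp [toCube, coord, rawCoord, Ne.symm hne] at this

lemma exists_box {C I : Type*} (σ : C ≃ I) {U : Set (C → Bool)} (hU : IsOpen U)
    (hne : U.Nonempty) :
    ∃ (d : Finset I) (p : I → Bool), ∀ y : C → Bool, (∀ i ∈ d, y (σ.symm i) = p i) → y ∈ U := by
  classical
  obtain ⟨z, hz⟩ := hne
  obtain ⟨I₀, u, hu, hsub⟩ := isOpen_pi_iff.1 hU z hz
  refine ⟨I₀.image σ, fun i => z (σ.symm i), fun y hy => hsub fun c hc => ?_⟩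
  have := hy (σ c) (Finset.mem_image_of_mem _ hc)
  simp only [Equiv.symm_apply_apply] at this
  rw [this]
  exact (hu c hc).2

lemma isOpen_box {C I : Type*} (σ : C ≃ I) (d : Finset I) (p : I → Bool) :
    IsOpen {y : C → Bool | ∀ i ∈ d, y (σ.symm i) = p i} := by
  have : {y : C → Bool | ∀ i ∈ d, y (σ.symm i) = p i} =
      ⋂ i ∈ d, (fun y : C → Bool => y (σ.symm i)) ⁻¹' {p i} := by
    ext y
    simp
  rw [this]
  exact isOpen_biInter_finset fun i _ => (isOpen_discrete _).preimage (continuous_apply _)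

lemma dense_range_iff {S C I : Type*} (σ : C ≃ I) (φ : S → C → Bool)
    (hφ : ∀ (d : Finset I) (p : I → Bool), ∃ s, ∀ i ∈ d, φ s (σ.symm i) = p i)
    (A : Set (range φ)) :
    Dense A ↔ ∀ (d : Finset I) (p : I → Bool),
      ∃ s ∈ rangeFactorization φ ⁻¹' A, ∀ i ∈ d, φ s (σ.symm i) = p i := by
  rw [dense_iff_inter_open]
  constructor
  · intro h d p
    obtain ⟨s₀, hs₀⟩ := hφ d p
    obtain ⟨⟨_, s, rfl⟩, hx, hA⟩ := h (Subtype.val ⁻¹' {y | ∀ i ∈ d, y (σ.symm i) = p i})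
      ((isOpen_box σ d p).preimage continuous_subtype_val) ⟨⟨_, s₀, rfl⟩, hs₀⟩
    exact ⟨s, hA, hx⟩
  · rintro h U hU ⟨x, hx⟩
    obtain ⟨V, hV, rfl⟩ := isOpen_induced_iff.1 hU
    obtain ⟨d, p, hdp⟩ := exists_box σ hV ⟨x, hx⟩
    obtain ⟨s, hs, hsd⟩ := h d p
    exact ⟨rangeFactorization φ s, hdp _ hsd, hs⟩

/-- For every infinite cardinal `κ` there is a `κ`-dense subset `X` of the Cantor cube
`{0,1}^(2^κ)` (so `|X| = κ` and, as a subspace, `Δ(X) = κ`) such that the subspace `X`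
is almost `2^κ`-resolvable but not `ω₁`-resolvable. Here the Cantor cube is realized
as `C → Bool` with the product topology, where `C` is a type of cardinality `2^κ`. -/
theorem stmt2 (κ : Cardinal.{u}) (hκ : ℵ₀ ≤ κ) :
    ∃ X : Set (((2 : Cardinal.{u}) ^ κ).out → Bool),
      (∀ U : Set (((2 : Cardinal.{u}) ^ κ).out → Bool), IsOpen U → U.Nonempty → κ ≤ #↥(X ∩ U)) ∧
      #↥X = κ ∧
      dispersion ↥X = κ ∧
      IsAlmostResolvable ↥X (2 ^ κ) ∧
      ¬ IsResolvable ↥X (aleph 1) := by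
  classical
  obtain ⟨S, rfl⟩ : ∃ S : Type u, #S = κ := ⟨κ.out, mk_out κ⟩
  have hinf : Infinite S := infinite_iff.2 hκ
  have hC : #((2 : Cardinal.{u}) ^ #S).out = #(Idx S) := by rw [mk_out, mk_idx, mk_set]
  obtain ⟨σ⟩ := Cardinal.eq.1 hC
  obtain ⟨e, he⟩ : ∃ e : Idx S ⊕ Set S → S → Bool, Indep e := by
    apply exists_independent_s2
    simp only [mk_sum, Cardinal.lift_id, mk_idx]
    exact add_eq_self (aleph0_le_mk _)
  obtain ⟨G, hG⟩ := exists_isSelection e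
  have hinj := toCube_injective σ e G
  set φ := toCube σ e G with hφdef
  have hφ : ∀ s i, φ s (σ.symm i) = coord e G i s := fun s i => by simp [hφdef, toCube]
  -- Cells with at most one name carry no compatibility requirement.
  have hlarge0 : ∀ d p, #S ≤ #(cell e G ∅ d p) := fun d p =>
    cell_large he hG (fun f g n _ _ _ hf => by simp at hf)
  have hlarge1 : ∀ f d p, #S ≤ #(cell e G {f} d p) := fun f d p =>
    cell_large he hG (fun f' g n _ _ hne hf hg => hne (by
      rw [Finset.mem_singleton.1 hf, Finset.mem_singleton.1 hg]))
  have hnonempty : ∀ {A : Set S}, #S ≤ #A → A.Nonempty := fun {A} hA => by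
    rw [← Set.nonempty_coe_sort, ← mk_ne_zero_iff]
    exact (lt_of_lt_of_le (aleph0_pos.trans_le hκ) hA).ne'
  have hdense := dense_range_iff σ φ (fun d p => by
    obtain ⟨s, hs⟩ := hnonempty (hlarge0 d p)
    exact ⟨s, fun i hi => (hφ s i).trans (hs.2 i hi)⟩)
  have hmkX : #(range φ) = #S := mk_range_eq φ hinj
  have hkdense : ∀ U : Set (((2 : Cardinal.{u}) ^ #S).out → Bool), IsOpen U → U.Nonempty →
      #S ≤ #↥(range φ ∩ U) := by
    intro U hU hne
    obtain ⟨d, p, hdp⟩ := exists_box σ hU hne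
    refine (hlarge0 d p).trans ?_
    rw [← mk_image_eq (s := cell e G ∅ d p) hinj]
    apply mk_le_mk_of_subset
    rintro _ ⟨s, hs, rfl⟩
    exact ⟨⟨s, rfl⟩, hdp _ fun i hi => (hφ s i).trans (hs.2 i hi)⟩
  refine ⟨range φ, hkdense, hmkX, ?_, ?_, ?_⟩
  · have : {c : Cardinal.{u} | ∃ G : Set (range φ), IsOpen G ∧ G.Nonempty ∧ #G = c} = {#S} := by
      ext c
      constructor
      · rintro ⟨W, hW, hne, rfl⟩
        obtain ⟨V, hV, rfl⟩ := isOpen_induced_iff.1 hW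
        obtain ⟨x, hx⟩ := hne
        apply le_antisymm
        · exact (mk_set_le _).trans hmkX.le
        · refine (hkdense V hV ⟨x, hx⟩).trans ?_
          rw [← Subtype.image_preimage_coe, mk_image_eq Subtype.val_injective]
      · rintro rfl
        exact ⟨univ, isOpen_univ, (range_nonempty_iff_nonempty.2 inferInstance).to_subtype.elim
          fun x => ⟨x, trivial⟩, by rw [mk_univ, hmkX]⟩
    rw [dispersion, this, csInf_singleton]
  · let D : Set S → Set (range φ) := fun f => {x | ∃ s, φ s = x ∧ e (.inr f) s = true}
    have hDdense : ∀ f, Dense (D f) := fun f => by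
      rw [hdense]
      intro d p
      obtain ⟨s, hs⟩ := hnonempty (hlarge1 f d p)
      exact ⟨s, ⟨s, rfl, hs.1 f (by simp)⟩, fun i hi => (hφ s i).trans (hs.2 i hi)⟩
    have hcap : ∀ f g, f ≠ g → IsNowhereDense (D f ∩ D g) := by
      intro f g hne
      -- The intersection lies in a closed set which a fresh coordinate `pair f g n` shows
      -- to contain no basic open set.
      let Z : Set (range φ) := {x | ∀ n, x.1 (σ.symm (.pair f g n)) = false}
      have hZc : IsClosed Z := by
        have : Z = ⋂ n, (fun x : range φ => x.1 (σ.symm (.pair f g n))) ⁻¹' {false} := by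
          ext x
          simp [Z]
        rw [this]
        exact isClosed_iInter fun n => (isClosed_discrete _).preimage
          ((continuous_apply _).comp continuous_subtype_val)
      have hZ : IsNowhereDense Z := by
        rw [hZc.isNowhereDense_iff, interior_eq_empty_iff_dense_compl, hdense]
        intro d p
        have hpinj : Function.Injective (fun n => Idx.pair f g n) := fun a b h => by
          simpa using h
        obtain ⟨n, hn⟩ := (d.finite_toSet.preimage hpinj.injOn).exists_notMem
        replace hn : Idx.pair f g n ∉ d := hn
        obtain ⟨s, hs⟩ := hnonempty (hlarge0 (insert (.pair f g n) d)
          (fun i => if i ∈ d then p i else true))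
        refine ⟨s, fun hsZ => ?_, fun i hi => ?_⟩
        · have h1 := hs.2 _ (Finset.mem_insert_self _ _)
          beta_reduce at h1
          rw [if_neg hn, ← hφ] at h1
          exact absurd (h1.symm.trans (hsZ n)) (by simp)
        · have h1 := hs.2 i (Finset.mem_insert_of_mem hi)
          beta_reduce at h1
          rw [if_pos hi] at h1
          exact (hφ s i).trans h1
      refine hZ.mono ?_
      rintro ⟨_, t, rfl⟩ ⟨⟨s, hs, hsf⟩, ⟨s', hs', hsg⟩⟩ n
      obtain rfl := hinj hs
      obtain rfl := hinj hs'
      change φ s' (σ.symm (.pair f g n)) = false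
      rw [hφ]
      simp [coord, rawCoord, hne, hsf, hsg]
    have hDinj : Function.Injective D := by
      intro f g hfg
      by_contra hne
      have h1 := hcap f g hne
      rw [← hfg, inter_self, IsNowhereDense, (hDdense f).closure_eq, interior_univ] at h1
      have : Nonempty (range φ) := (range_nonempty_iff_nonempty.2 inferInstance).to_subtype
      exact univ_nonempty.ne_empty h1
    refine ⟨range D, by rw [mk_range_eq D hDinj, mk_set], ?_, ?_⟩
    · rintro _ ⟨f, rfl⟩
      exact hDdense f
    · rintro _ ⟨f, rfl⟩ _ ⟨g, rfl⟩ hne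
      exact hcap f g fun h => hne (h ▸ rfl)
  · rintro ⟨𝒟, hcard, hD, hdisj⟩
    have hunc : Uncountable 𝒟 := by
      rw [← aleph0_lt_mk_iff, hcard]
      exact aleph0_lt_aleph_one
    have hcell : ∀ E : 𝒟, ∃ F d p, Compat F d p ∧
        #((rangeFactorization φ ⁻¹' E.1)ᶜ ∩ cell e G F d p : Set S) < #S := by
      intro E
      apply exists_cell_of_dense hG
      simpa only [hφ] using (hdense E.1).1 (hD E.1 E.2)
    choose F d p hcomp hsmall using hcell
    obtain ⟨A, B, hAB, F', d', p', hc, hFA, hFB, hdA, hdB, hpA, hpB⟩ :=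
      exists_compat_union F d p hcomp
    -- Disjointness of `A` and `B` covers a large cell by two small sets.
    have hsub : cell e G F' d' p' ⊆
        ((rangeFactorization φ ⁻¹' A.1)ᶜ ∩ cell e G (F A) (d A) (p A)) ∪
        ((rangeFactorization φ ⁻¹' B.1)ᶜ ∩ cell e G (F B) (d B) (p B)) := by
      rintro s ⟨hsF, hsd⟩
      by_cases hs : rangeFactorization φ s ∈ A.1
      · refine .inr ⟨fun hsB => ?_, fun f hf => hsF f (hFB hf),
          fun i hi => (hsd i (hdB hi)).trans (hpB i hi)⟩
        have := hdisj A.2 B.2 (fun h => hAB (Subtype.ext h))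
        exact Set.disjoint_left.1 this hs hsB
      · exact .inl ⟨hs, fun f hf => hsF f (hFA hf),
          fun i hi => (hsd i (hdA hi)).trans (hpA i hi)⟩
    have hle := (cell_large he hG hc).trans ((mk_le_mk_of_subset hsub).trans (mk_union_le _ _))
    exact absurd hle (not_le.2 (add_lt_of_lt hκ (hsmall A) (hsmall B)))
end

section
/- Let κ be an infinite cardinal, D = ⟨D⁰_i, D¹_i⟩ (i < 2^κ) a family of 2-partitions of κ, I and J disjoint subsets of 2^κ, and j : [I]² × ω → J an injection; define E⁰_{a,m} = D⁰_{j(a,m)} \ (D⁰_{a⁻} ∩ D⁰_{a⁺}) and E¹_{a,m} = κ \ E⁰_{a,m} for a = {a⁻ < a⁺} ∈ [I]² and m < ω. Then for every finite partial function η from [I]² × ω to 2 and every ordinal α ∈ I there is a finite partial function φ from 2^κ to 2 such that α ∉ dom φ and E[η] ⊇ D[φ]. -/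
/-!
Let `φ` take the value `g p` at the code `j(p)` of each `p ∈ t`, and the value `1` at every
endpoint, other than `α`, of a pair occurring in `t`. Since `j` is injective with values in `J`,
which is disjoint from `I`, this is well defined and `α` is not in its domain. Let `x ∈ D[φ]`
and `p ∈ t`. If `g p = 1`, then `x ∉ D⁰_{j(p)} ⊇ E⁰_p`. If `g p = 0`, then `x ∈ D⁰_{j(p)}`, and
one of the two distinct endpoints of `p` differs from `α`, so `x` lies outside the `D⁰` of that
endpoint; hence `x ∈ E⁰_p`.
-/

open Cardinal Set

universe u

/-- `B[ε]` for a finite partial function `ε` from the index set to `2`, encoded as a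
finite domain `t` together with a choice function `f` (`false` selects `B⁰_ζ = B0 ζ`,
`true` selects `B¹_ζ = (B0 ζ)ᶜ`). -/
def partInter {ι S : Type u} (B0 : ι → Set S) (t : Finset ι) (f : ι → Bool) : Set S :=
  ⋂ ζ ∈ t, if f ζ then (B0 ζ)ᶜ else B0 ζ

/-- `E⁰_{a,m} = D⁰_{j(a,m)} \ (D⁰_{a⁻} ∩ D⁰_{a⁺})`, where the unordered pair
`a ∈ [I]²` is encoded as an ordered pair `(p.1, p.2.1)` with `p.1 < p.2.1`, and
`m = p.2.2`. -/
def Epart {ι S : Type u} (D0 : ι → Set S) (j : ι → ι → ℕ → ι) (p : ι × ι × ℕ) : Set S :=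
  D0 (j p.1 p.2.1 p.2.2) \ (D0 p.1 ∩ D0 p.2.1)

/-- For every finite partial function `η` from `[I]² × ω` to `2` and every `α ∈ I`
there is a finite partial function `φ` from `2^κ` to `2` with `α ∉ dom φ` and
`E[η] ⊇ D[φ]`. -/
theorem stmt3 (κ : Cardinal.{u}) (hκ : ℵ₀ ≤ κ)
    {S ι : Type u} [LinearOrder ι] (hS : #S = κ) (hι : #ι = 2 ^ κ)
    (D0 : ι → Set S) (I J : Set ι) (hIJ : Disjoint I J)
    (j : ι → ι → ℕ → ι)
    (hjJ : ∀ α β m, α ∈ I → β ∈ I → α < β → j α β m ∈ J)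
    (hjinj : ∀ α β m α' β' m', α ∈ I → β ∈ I → α < β → α' ∈ I → β' ∈ I → α' < β' →
        j α β m = j α' β' m' → α = α' ∧ β = β' ∧ m = m')
    (t : Finset (ι × ι × ℕ)) (g : ι × ι × ℕ → Bool)
    (ht : ∀ p ∈ t, p.1 ∈ I ∧ p.2.1 ∈ I ∧ p.1 < p.2.1)
    (α : ι) (hα : α ∈ I) :
    ∃ (s : Finset ι) (f : ι → Bool), α ∉ s ∧
      partInter D0 s f ⊆ partInter (Epart D0 j) t g := by
  classical
  let c : ι × ι × ℕ → ι := fun p => j p.1 p.2.1 p.2.2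
  -- On `I` the function `f` always selects `D¹`; on the codes `c p ∈ J` it copies `g`.
  let f : ι → Bool := fun i => decide (i ∈ I ∨ ∃ p ∈ t, c p = i ∧ g p = true)
  have hcJ : ∀ p ∈ t, c p ∈ J := fun p hp =>
    hjJ _ _ _ (ht p hp).1 (ht p hp).2.1 (ht p hp).2.2
  have hcI : ∀ p ∈ t, c p ∉ I := fun p hp hI =>
    Set.disjoint_left.mp hIJ hI (hcJ p hp)
  have hfI : ∀ i ∈ I, f i = true := fun i hi => decide_eq_true (Or.inl hi)
  -- Injectivity of `j` on valid triples makes `f` well defined on the codes.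
  have hfc : ∀ p ∈ t, f (c p) = g p := by
    intro p hp
    rw [Bool.eq_iff_iff, decide_eq_true_iff]
    constructor
    · rintro (h | ⟨q, hq, hqp, hg⟩)
      · exact absurd h (hcI p hp)
      · obtain ⟨h1, h2, h3⟩ := hjinj _ _ _ _ _ _ (ht q hq).1 (ht q hq).2.1 (ht q hq).2.2
          (ht p hp).1 (ht p hp).2.1 (ht p hp).2.2 hqp
        have hqp' : q = p := Prod.ext h1 (Prod.ext h2 h3)
        rwa [← hqp']
    · exact fun hg => Or.inr ⟨p, hp, rfl, hg⟩
  refine ⟨(t.image c ∪ t.image (fun p => p.1) ∪ t.image (fun p => p.2.1)).erase α, f,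
    Finset.notMem_erase α _, ?_⟩
  intro x hx
  simp only [partInter, Set.mem_iInter] at hx ⊢
  intro p hp
  obtain ⟨h1, h2, hlt⟩ := ht p hp
  have hcα : c p ≠ α := fun h => hcI p hp (h ▸ hα)
  have hxc := hx (c p) (Finset.mem_erase.mpr ⟨hcα, by
    simp only [Finset.mem_union]
    exact Or.inl (Or.inl (Finset.mem_image_of_mem c hp))⟩)
  rw [hfc p hp] at hxc
  -- At most one endpoint of the pair equals `α`; the other one keeps `x` out of `D⁰ ∩ D⁰`.
  have hxn : x ∉ D0 p.1 ∩ D0 p.2.1 := by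
    rintro ⟨hx1, hx2⟩
    by_cases hα1 : p.1 = α
    · have h := hx p.2.1 (Finset.mem_erase.mpr ⟨fun h => hlt.ne (hα1.trans h.symm), by
        simp only [Finset.mem_union]
        exact Or.inr (Finset.mem_image_of_mem (fun p => p.2.1) hp)⟩)
      rw [if_pos (hfI _ h2)] at h
      exact h hx2
    · have h := hx p.1 (Finset.mem_erase.mpr ⟨hα1, by
        simp only [Finset.mem_union]
        exact Or.inl (Or.inr (Finset.mem_image_of_mem (fun p => p.1) hp))⟩)
      rw [if_pos (hfI _ h1)] at h
      exact h hx1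
  by_cases hg : g p = true
  · rw [if_pos hg] at hxc ⊢
    exact fun hE => hxc hE.1
  · rw [if_neg hg] at hxc ⊢
    exact ⟨hxc, hxn⟩
end

section
/- Let κ be an infinite cardinal, C = ⟨C⁰_ξ, C¹_ξ⟩ (ξ < 2^κ) and D = ⟨D⁰_i, D¹_i⟩ (i < 2^κ) families of 2-partitions of κ such that |C[ε] ∩ D[φ]| ≥ κ for all finite partial functions ε, φ from 2^κ to 2. Let I, J be disjoint subsets of 2^κ, j : [I]² × ω → J an injection, and define E⁰_{a,m} = D⁰_{j(a,m)} \ (D⁰_{a⁻} ∩ D⁰_{a⁺}), E¹_{a,m} = κ \ E⁰_{a,m}. Then the combined family C ∪ E is κ-independent, i.e. |C[ε] ∩ E[η]| ≥ κ for every finite partial function ε from 2^κ to 2 and every finite partial function η from [I]² × ω to 2. -/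
/-!
Outside `D⁰_{a⁻}` the sets `E⁰_{a,m}` and `D⁰_{j(a,m)}` coincide. Given a finite partial function
`η` on `[I]² × ω`, let `φ` take the value `1` at every `a⁻` and `η(a,m)` at `j(a,m)`, for
`(a,m) ∈ dom η`. This is well defined because `j` is injective with values in `J`, which is
disjoint from `I`. Then `D[φ] ⊆ E[η]`, so `C[ε] ∩ E[η]` contains `C[ε] ∩ D[φ]`, a set of size
at least `κ`.
-/

open Cardinal Set

universe u

/-- If `|C[ε] ∩ D[φ]| ≥ κ` for all finite partial functions `ε, φ`, then the combined
family `C ∪ E` is `κ`-independent: `|C[ε] ∩ E[η]| ≥ κ` for every finite partial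
function `ε` from `2^κ` to `2` and every finite partial function `η` from
`[I]² × ω` to `2`. -/
theorem stmt4 (κ : Cardinal.{u}) (hκ : ℵ₀ ≤ κ)
    {S ι : Type u} [LinearOrder ι] (hS : #S = κ) (hι : #ι = 2 ^ κ)
    (C0 D0 : ι → Set S)
    (hCD : ∀ (s : Finset ι) (f : ι → Bool) (s' : Finset ι) (f' : ι → Bool),
        κ ≤ #↥(partInter C0 s f ∩ partInter D0 s' f'))
    (I J : Set ι) (hIJ : Disjoint I J)
    (j : ι → ι → ℕ → ι)
    (hjJ : ∀ α β m, α ∈ I → β ∈ I → α < β → j α β m ∈ J)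
    (hjinj : ∀ α β m α' β' m', α ∈ I → β ∈ I → α < β → α' ∈ I → β' ∈ I → α' < β' →
        j α β m = j α' β' m' → α = α' ∧ β = β' ∧ m = m') :
    ∀ (s : Finset ι) (f : ι → Bool) (t : Finset (ι × ι × ℕ)) (g : ι × ι × ℕ → Bool),
      (∀ p ∈ t, p.1 ∈ I ∧ p.2.1 ∈ I ∧ p.1 < p.2.1) →
      κ ≤ #↥(partInter C0 s f ∩ partInter (Epart D0 j) t g) := by
  classical
  intro s f t g ht
  -- The required sign at `x = j(p)` is `g p`; at indices outside the image of `t` under `j`,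
  -- in particular on `I`, the condition is vacuous and the sign is `true`.
  let f' : ι → Bool := fun x => decide (∀ p ∈ t, j p.1 p.2.1 p.2.2 = x → g p = true)
  refine (hCD s f (t.image (fun p => p.1) ∪ t.image (fun p => j p.1 p.2.1 p.2.2)) f').trans
    (Cardinal.mk_le_mk_of_subset (inter_subset_inter_right _ ?_))
  intro x hx
  simp only [partInter, mem_iInter] at hx ⊢
  intro p hp
  obtain ⟨h1, h2, h3⟩ := ht p hp
  have hf1 : f' p.1 = true := by
    simp only [f', decide_eq_true_eq]
    intro q hq e
    obtain ⟨k1, k2, k3⟩ := ht q hq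
    exact absurd (e ▸ hjJ _ _ q.2.2 k1 k2 k3) (disjoint_left.mp hIJ h1)
  have hf2 : f' (j p.1 p.2.1 p.2.2) = g p := by
    rw [Bool.eq_iff_iff]
    simp only [f', decide_eq_true_eq]
    refine ⟨fun h => h p hp rfl, fun h q hq e => ?_⟩
    obtain ⟨k1, k2, k3⟩ := ht q hq
    obtain ⟨e1, e2, e3⟩ := hjinj _ _ _ _ _ _ k1 k2 k3 h1 h2 h3 e
    have : q = p := Prod.ext e1 (Prod.ext e2 e3)
    rwa [this]
  have hx1 := hx p.1 (Finset.mem_union_left _ (Finset.mem_image_of_mem _ hp))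
  have hx2 := hx (j p.1 p.2.1 p.2.2)
    (Finset.mem_union_right _ (Finset.mem_image.mpr ⟨p, hp, rfl⟩))
  rw [hf1] at hx1
  rw [hf2] at hx2
  cases hg : g p <;> simp_all [Epart]
end

section
/- Let κ be an infinite cardinal, C = ⟨C⁰_ξ, C¹_ξ⟩ (ξ < 2^κ) and D = ⟨D⁰_i, D¹_i⟩ (i < 2^κ) families of 2-partitions of κ such that |C[ε] ∩ D[φ]| ≥ κ for all finite partial functions ε, φ from 2^κ to 2. Let I, J be disjoint subsets of 2^κ, j : [I]² × ω → J an injection, and define E⁰_{a,m} = D⁰_{j(a,m)} \ (D⁰_{a⁻} ∩ D⁰_{a⁺}), E¹_{a,m} = κ \ E⁰_{a,m}. Then for every α ∈ I the set D⁰_α is dense in the space X_{C∪E}, i.e. in κ endowed with the topology generated by the subbase {C^i_ξ : ξ < 2^κ, i < 2} ∪ {E^i_{a,m} : a ∈ [I]², m < ω, i < 2}. -/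
/-!
Fix `α ∈ I`, an open set `U` and a point `x ∈ U`. A point `y ∈ U ∩ D⁰_α` is obtained by
prescribing its position with respect to finitely many of the partitions `C` and `D`:

* `y` lies on the same side of each `C_ξ` as `x` (`sideC`);
* `y ∈ D⁰_α`, and `y ∉ D⁰_β` for `β ∈ I`, `β ≠ α`;
* `y ∈ D⁰_{j(a,m)}` if and only if `x ∈ E⁰_{a,m}` (`sideD` encodes these last two).

The last two requirements are compatible because `j` is injective with values in `J`, which is
disjoint from `I`. A pair `a ∈ [I]²` contains some `β ≠ α`, so `y ∉ D⁰_{a⁻} ∩ D⁰_{a⁺}`, and hence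
`y ∈ E⁰_{a,m} ↔ y ∈ D⁰_{j(a,m)} ↔ x ∈ E⁰_{a,m}`. Membership in `U` only needs finitely many of
these requirements (`exists_partInter_subset`, by induction on the generation of `U`), and the
set they define is nonempty by the independence hypothesis.
-/

open Cardinal Set

universe u

/-- The topology of `X_{C ∪ E}`: generated by the subbase
`{C⁰_ξ, C¹_ξ : ξ} ∪ {E⁰_{a,m}, E¹_{a,m} : a ∈ [I]², m < ω}`. -/
def topCE {ι S : Type u} [LinearOrder ι] (C0 D0 : ι → Set S) (j : ι → ι → ℕ → ι)
    (I : Set ι) : TopologicalSpace S :=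
  TopologicalSpace.generateFrom
    ({s | ∃ ξ : ι, s = C0 ξ ∨ s = (C0 ξ)ᶜ} ∪
      {s | ∃ p : ι × ι × ℕ, (p.1 ∈ I ∧ p.2.1 ∈ I ∧ p.1 < p.2.1) ∧
        (s = Epart D0 j p ∨ s = (Epart D0 j p)ᶜ)})

open Classical in
/-- The side of each partition `C_ξ` on which the point `x` lies. -/
noncomputable def sideC {ι S : Type u} (C0 : ι → Set S) (x : S) (ξ : ι) : Bool :=
  decide (x ∉ C0 ξ)

open Classical in
/-- The choice of sides of the `D_i` for which `D⁰_i` is selected exactly when `i = α`, or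
`i = j(a,m)` for some `a ∈ [I]²` and `m` with `x ∈ E⁰_{a,m}`. -/
noncomputable def sideD {ι S : Type u} [LinearOrder ι] (D0 : ι → Set S) (j : ι → ι → ℕ → ι)
    (I : Set ι) (α : ι) (x : S) (i : ι) : Bool :=
  decide (¬ (i = α ∨ ∃ p : ι × ι × ℕ, (p.1 ∈ I ∧ p.2.1 ∈ I ∧ p.1 < p.2.1) ∧
    i = j p.1 p.2.1 p.2.2 ∧ x ∈ Epart D0 j p))

theorem mem_partInter {ι S : Type u} {B0 : ι → Set S} {t : Finset ι} {f : ι → Bool} {y : S} :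
    y ∈ partInter B0 t f ↔ ∀ ζ ∈ t, (y ∈ B0 ζ ↔ f ζ = false) := by
  simp only [partInter, mem_iInter]
  refine forall₂_congr fun ζ _ => ?_
  cases f ζ <;> simp

/-- A point on the sides given by `sideD` of `D_{a⁻}`, `D_{a⁺}` and `D_{j(a,m)}` lies in `E⁰_{a,m}`
if and only if `x` does. -/
theorem mem_Epart_iff {S ι : Type u} [LinearOrder ι] {D0 : ι → Set S}
    {I J : Set ι} (hIJ : Disjoint I J) {j : ι → ι → ℕ → ι}
    (hjJ : ∀ α β m, α ∈ I → β ∈ I → α < β → j α β m ∈ J)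
    (hjinj : ∀ α β m α' β' m', α ∈ I → β ∈ I → α < β → α' ∈ I → β' ∈ I → α' < β' →
        j α β m = j α' β' m' → α = α' ∧ β = β' ∧ m = m')
    {α : ι} (hα : α ∈ I) {x y : S} {p : ι × ι × ℕ}
    (hp : p.1 ∈ I ∧ p.2.1 ∈ I ∧ p.1 < p.2.1)
    (hy : y ∈ partInter D0 {p.1, p.2.1, j p.1 p.2.1 p.2.2} (sideD D0 j I α x)) :
    y ∈ Epart D0 j p ↔ x ∈ Epart D0 j p := by
  rw [mem_partInter] at hy
  have hne : ∀ β ∈ I, ∀ q : ι × ι × ℕ, (q.1 ∈ I ∧ q.2.1 ∈ I ∧ q.1 < q.2.1) →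
      β ≠ j q.1 q.2.1 q.2.2 := fun β hβ q hq h =>
    disjoint_left.1 hIJ hβ (h ▸ hjJ _ _ _ hq.1 hq.2.1 hq.2.2)
  have hside : ∀ β ∈ I, sideD D0 j I α x β = false → β = α := by
    intro β hβ h
    simp only [sideD, decide_eq_false_iff_not, not_not] at h
    rcases h with h | ⟨q, hq, h, -⟩
    · exact h
    · exact (hne β hβ q hq h).elim
  have hj : y ∈ D0 (j p.1 p.2.1 p.2.2) ↔ x ∈ Epart D0 j p := by
    rw [hy _ (by simp)]
    simp only [sideD, decide_eq_false_iff_not, not_not]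
    constructor
    · rintro (h | ⟨q, hq, h, hx⟩)
      · exact (hne α hα p hp h.symm).elim
      · obtain ⟨h1, h2, h3⟩ := hjinj _ _ _ _ _ _ hp.1 hp.2.1 hp.2.2 hq.1 hq.2.1 hq.2.2 h
        have : p = q := Prod.ext h1 (Prod.ext h2 h3)
        exact this ▸ hx
    · exact fun hx => Or.inr ⟨p, hp, rfl, hx⟩
  have hnot : y ∉ D0 p.1 ∩ D0 p.2.1 := by
    rintro ⟨h1, h2⟩
    have e1 := hside _ hp.1 ((hy _ (by simp)).1 h1)
    have e2 := hside _ hp.2.1 ((hy _ (by simp)).1 h2)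
    exact hp.2.2.ne (e1.trans e2.symm)
  rw [← hj]
  exact ⟨fun h => h.1, fun h => ⟨h, hnot⟩⟩

/-- Every open neighbourhood of `x` contains a set `C[ε] ∩ D[φ]`, where `ε` and `φ` are finite
restrictions of `sideC` and `sideD`; this set need not contain `x`. -/
theorem exists_partInter_subset {S ι : Type u} [LinearOrder ι] {C0 D0 : ι → Set S}
    {I J : Set ι} (hIJ : Disjoint I J) {j : ι → ι → ℕ → ι}
    (hjJ : ∀ α β m, α ∈ I → β ∈ I → α < β → j α β m ∈ J)
    (hjinj : ∀ α β m α' β' m', α ∈ I → β ∈ I → α < β → α' ∈ I → β' ∈ I → α' < β' →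
        j α β m = j α' β' m' → α = α' ∧ β = β' ∧ m = m')
    {α : ι} (hα : α ∈ I) {x : S} {U : Set S} (hU : @IsOpen S (topCE C0 D0 j I) U) (hx : x ∈ U) :
    ∃ s t : Finset ι,
      partInter C0 s (sideC C0 x) ∩ partInter D0 t (sideD D0 j I α x) ⊆ U := by
  change TopologicalSpace.GenerateOpen _ U at hU
  induction hU with
  | basic V hV =>
    rcases hV with ⟨ξ, hV⟩ | ⟨p, hp, hV⟩
    · refine ⟨{ξ}, ∅, fun y hy => ?_⟩
      have h := mem_partInter.1 hy.1 ξ (by simp)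
      simp only [sideC, decide_eq_false_iff_not, not_not] at h
      rcases hV with rfl | rfl
      · exact h.2 hx
      · exact fun hy' => hx (h.1 hy')
    · refine ⟨∅, {p.1, p.2.1, j p.1 p.2.1 p.2.2}, fun y hy => ?_⟩
      have h := mem_Epart_iff hIJ hjJ hjinj hα hp hy.2
      rcases hV with rfl | rfl
      · exact h.2 hx
      · exact fun hy' => hx (h.1 hy')
  | univ => exact ⟨∅, ∅, subset_univ _⟩
  | inter V W _ _ ihV ihW =>
    obtain ⟨s, t, h⟩ := ihV hx.1
    obtain ⟨s', t', h'⟩ := ihW hx.2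
    refine ⟨s ∪ s', t ∪ t', fun y ⟨hy1, hy2⟩ => ?_⟩
    rw [mem_partInter] at hy1 hy2
    exact ⟨h ⟨mem_partInter.2 fun ζ hζ => hy1 ζ (Finset.mem_union_left _ hζ),
        mem_partInter.2 fun ζ hζ => hy2 ζ (Finset.mem_union_left _ hζ)⟩,
      h' ⟨mem_partInter.2 fun ζ hζ => hy1 ζ (Finset.mem_union_right _ hζ),
        mem_partInter.2 fun ζ hζ => hy2 ζ (Finset.mem_union_right _ hζ)⟩⟩
  | sUnion K _ ih =>
    obtain ⟨V, hV, hxV⟩ := hx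
    obtain ⟨s, t, h⟩ := ih V hV hxV
    exact ⟨s, t, h.trans (subset_sUnion_of_mem hV)⟩

/-- If `|C[ε] ∩ D[φ]| ≥ κ` for all finite partial functions `ε, φ`, then for every
`α ∈ I` the set `D⁰_α` is dense in the space `X_{C ∪ E}`. -/
theorem stmt5 (κ : Cardinal.{u}) (hκ : ℵ₀ ≤ κ)
    {S ι : Type u} [LinearOrder ι] (hS : #S = κ) (hι : #ι = 2 ^ κ)
    (C0 D0 : ι → Set S)
    (hCD : ∀ (s : Finset ι) (f : ι → Bool) (s' : Finset ι) (f' : ι → Bool),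
        κ ≤ #↥(partInter C0 s f ∩ partInter D0 s' f'))
    (I J : Set ι) (hIJ : Disjoint I J)
    (j : ι → ι → ℕ → ι)
    (hjJ : ∀ α β m, α ∈ I → β ∈ I → α < β → j α β m ∈ J)
    (hjinj : ∀ α β m α' β' m', α ∈ I → β ∈ I → α < β → α' ∈ I → β' ∈ I → α' < β' →
        j α β m = j α' β' m' → α = α' ∧ β = β' ∧ m = m') :
    ∀ α ∈ I, @Dense S (topCE C0 D0 j I) (D0 α) := by
  intro α hα
  let _ := topCE C0 D0 j I
  rw [dense_iff_inter_open]
  rintro U hU ⟨x, hx⟩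
  obtain ⟨s, t, h⟩ := exists_partInter_subset hIJ hjJ hjinj hα hU hx
  have hne := hCD s (sideC C0 x) (insert α t) (sideD D0 j I α x)
  have hpos := (Cardinal.aleph0_pos.trans_le hκ).trans_le hne
  obtain ⟨y, hy1, hy2⟩ := Cardinal.mk_ne_zero_iff.1 hpos.ne'
  rw [mem_partInter] at hy2
  refine ⟨y, h ⟨hy1, mem_partInter.2 fun ζ hζ => hy2 ζ (Finset.mem_insert_of_mem hζ)⟩, ?_⟩
  exact (hy2 α (Finset.mem_insert_self _ _)).2 (by simp [sideD])
end

section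
/- Let κ be an infinite cardinal, C = ⟨C⁰_ξ, C¹_ξ⟩ (ξ < 2^κ) and D = ⟨D⁰_i, D¹_i⟩ (i < 2^κ) families of 2-partitions of κ such that |C[ε] ∩ D[φ]| ≥ κ for all finite partial functions ε, φ from 2^κ to 2. Let I, J be disjoint subsets of 2^κ, j : [I]² × ω → J an injection, and define E⁰_{a,m} = D⁰_{j(a,m)} \ (D⁰_{a⁻} ∩ D⁰_{a⁺}), E¹_{a,m} = κ \ E⁰_{a,m}. Then for any two distinct α, β ∈ I the set D⁰_α ∩ D⁰_β is nowhere dense in the space X_{C∪E}, i.e. in κ endowed with the topology generated by the subbase {C^i_ξ : ξ < 2^κ, i < 2} ∪ {E^i_{a,m} : a ∈ [I]², m < ω, i < 2}. -/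
/-!
A basic open set `U` around a point `x` is determined by finitely many conditions
`y ∈ C⁰_ξ ↔ x ∈ C⁰_ξ` and `y ∈ E⁰_{b,n} ↔ x ∈ E⁰_{b,n}` (`exists_finite_conditions`).
For `a = {α, β}` choose `m` such that no condition mentions `E_{a,m}`. The open set `E⁰_{a,m}`
misses `D⁰_α ∩ D⁰_β`, so it suffices that it meets `U`. Look for a point `y` outside all `D⁰_γ`
for the finitely many `γ ∈ I` involved: for such `y`, `y ∈ E⁰_{b,n}` just means
`y ∈ D⁰_{j(b,n)}`. As `j` is injective with values outside `I`, all requirements on `y` together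
are of the form `y ∈ C[ε] ∩ D[φ]`, and this set is nonempty.
-/

open Cardinal Set

universe u

/-- Every open set around `x` in `X_{C ∪ E}` contains all points agreeing with `x` on finitely
many of the two-partitions `C_ξ` and `E_{a,m}`. -/
lemma exists_finite_conditions {ι S : Type u} [LinearOrder ι] (C0 D0 : ι → Set S)
    (j : ι → ι → ℕ → ι) (I : Set ι) (W : Set S) (hW : @IsOpen S (topCE C0 D0 j I) W)
    (x : S) (hx : x ∈ W) :
    ∃ (s : Finset ι) (T : Finset (ι × ι × ℕ)),
      (∀ p ∈ T, p.1 ∈ I ∧ p.2.1 ∈ I ∧ p.1 < p.2.1) ∧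
      ∀ y, (∀ ξ ∈ s, y ∈ C0 ξ ↔ x ∈ C0 ξ) →
        (∀ p ∈ T, y ∈ Epart D0 j p ↔ x ∈ Epart D0 j p) → y ∈ W := by
  classical
  change TopologicalSpace.GenerateOpen _ W at hW
  induction hW with
  | basic W hW =>
    rcases hW with ⟨ξ, h⟩ | ⟨p, hp, h⟩
    · refine ⟨{ξ}, ∅, by simp, fun y h1 _ => ?_⟩
      have := h1 ξ (by simp)
      rcases h with rfl | rfl
      · exact this.2 hx
      · exact fun hy => hx (this.1 hy)
    · refine ⟨∅, {p}, by simpa using hp, fun y _ h2 => ?_⟩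
      have := h2 p (by simp)
      rcases h with rfl | rfl
      · exact this.2 hx
      · exact fun hy => hx (this.1 hy)
  | univ => exact ⟨∅, ∅, by simp, fun _ _ _ => mem_univ _⟩
  | inter U V _ _ ihU ihV =>
    obtain ⟨s, T, hT, h⟩ := ihU hx.1
    obtain ⟨s', T', hT', h'⟩ := ihV hx.2
    refine ⟨s ∪ s', T ∪ T', fun p hp => ?_, fun y h1 h2 => ⟨?_, ?_⟩⟩
    · exact (Finset.mem_union.1 hp).elim (hT p) (hT' p)
    · exact h y (fun ξ hξ => h1 ξ (Finset.mem_union_left _ hξ))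
        (fun p hp => h2 p (Finset.mem_union_left _ hp))
    · exact h' y (fun ξ hξ => h1 ξ (Finset.mem_union_right _ hξ))
        (fun p hp => h2 p (Finset.mem_union_right _ hp))
  | sUnion K _ ih =>
    obtain ⟨U, hU, hxU⟩ := hx
    obtain ⟨s, T, hT, h⟩ := ih U hU hxU
    exact ⟨s, T, hT, fun y h1 h2 => ⟨U, hU, h y h1 h2⟩⟩

lemma mem_partInter_iff {ι S : Type u} (B0 : ι → Set S) (t : Finset ι) (f : ι → Bool) (y : S) :
    y ∈ partInter B0 t f ↔ ∀ ζ ∈ t, (y ∈ B0 ζ ↔ f ζ = false) := by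
  simp only [partInter, mem_iInter]
  refine forall₂_congr fun ζ _ => ?_
  cases f ζ <;> simp

/-- The case `α < β` of the theorem, under the weaker hypothesis that the sets `C[ε] ∩ D[φ]` are
nonempty. -/
lemma isNowhereDense_inter_of_lt {S ι : Type u} [LinearOrder ι]
    (C0 D0 : ι → Set S)
    (hCD : ∀ (s : Finset ι) (f : ι → Bool) (s' : Finset ι) (f' : ι → Bool),
        (partInter C0 s f ∩ partInter D0 s' f').Nonempty)
    (I J : Set ι) (hIJ : Disjoint I J)
    (j : ι → ι → ℕ → ι)
    (hjJ : ∀ α β m, α ∈ I → β ∈ I → α < β → j α β m ∈ J)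
    (hjinj : ∀ α β m α' β' m', α ∈ I → β ∈ I → α < β → α' ∈ I → β' ∈ I → α' < β' →
        j α β m = j α' β' m' → α = α' ∧ β = β' ∧ m = m')
    (α β : ι) (hα : α ∈ I) (hβ : β ∈ I) (hlt : α < β) :
    @IsNowhereDense S (topCE C0 D0 j I) (D0 α ∩ D0 β) := by
  classical
  let _ := topCE C0 D0 j I
  change interior (closure (D0 α ∩ D0 β)) = ∅
  refine eq_empty_iff_forall_notMem.2 fun x hx => ?_
  obtain ⟨s, T, hT, h⟩ := exists_finite_conditions C0 D0 j I _ isOpen_interior x hx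
  obtain ⟨m, hm⟩ := Infinite.exists_notMem_finset (T.image fun p => p.2.2)
  -- The indices of the sets `D⁰` that have to contain `y`; all of them lie in `J`.
  let P : ι → Prop := fun δ =>
    δ = j α β m ∨ ∃ p ∈ T, δ = j p.1 p.2.1 p.2.2 ∧ x ∈ Epart D0 j p
  have hPI : ∀ δ ∈ I, ¬ P δ := by
    rintro δ hδ (rfl | ⟨p, hp, rfl, -⟩)
    · exact disjoint_left.1 hIJ hδ (hjJ _ _ _ hα hβ hlt)
    · obtain ⟨h1, h2, h3⟩ := hT p hp
      exact disjoint_left.1 hIJ hδ (hjJ _ _ _ h1 h2 h3)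
  obtain ⟨y, hyC, hyD⟩ := hCD s (fun ξ => decide (x ∉ C0 ξ))
    ({α, j α β m} ∪ T.image (fun p => p.1) ∪ T.image (fun p => j p.1 p.2.1 p.2.2))
    (fun δ => decide (¬ P δ))
  rw [mem_partInter_iff] at hyC hyD
  simp only [decide_eq_false_iff_not, not_not] at hyC hyD
  have hyE : y ∈ Epart D0 j (α, β, m) :=
    ⟨(hyD _ (by simp)).2 (Or.inl rfl), fun hy => hPI α hα ((hyD α (by simp)).1 hy.1)⟩
  have hyW : y ∈ closure (D0 α ∩ D0 β) := by
    refine interior_subset (h y hyC fun p hp => ?_)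
    obtain ⟨h1, h2, h3⟩ := hT p hp
    have hp1 : y ∉ D0 p.1 := fun hy =>
      hPI _ h1 ((hyD p.1 (Finset.mem_union_left _ (Finset.mem_union_right _
        (Finset.mem_image_of_mem (fun p => p.1) hp)))).1 hy)
    have hpj := hyD (j p.1 p.2.1 p.2.2) (Finset.mem_union_right _
        (Finset.mem_image_of_mem (fun p => j p.1 p.2.1 p.2.2) hp))
    constructor
    · intro hy
      rcases hpj.1 hy.1 with he | ⟨q, hq, he, hxq⟩
      · exact absurd (Finset.mem_image.2 ⟨p, hp, (hjinj _ _ _ _ _ _ h1 h2 h3 hα hβ hlt he).2.2⟩) hm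
      · obtain ⟨g1, g2, g3⟩ := hT q hq
        obtain ⟨e1, e2, e3⟩ := hjinj _ _ _ _ _ _ h1 h2 h3 g1 g2 g3 he
        have : p = q := Prod.ext e1 (Prod.ext e2 e3)
        rwa [this]
    · exact fun hxp => ⟨hpj.2 (Or.inr ⟨p, hp, rfl, hxp⟩), fun hy => hp1 hy.1⟩
  have hopen : IsOpen (Epart D0 j (α, β, m)) :=
    TopologicalSpace.isOpen_generateFrom_of_mem
      (Or.inr ⟨(α, β, m), ⟨hα, hβ, hlt⟩, Or.inl rfl⟩)
  obtain ⟨z, hzE, hz⟩ := mem_closure_iff.1 hyW _ hopen hyE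
  exact hzE.2 hz

/-- If `|C[ε] ∩ D[φ]| ≥ κ` for all finite partial functions `ε, φ`, then for any two
distinct `α, β ∈ I` the set `D⁰_α ∩ D⁰_β` is nowhere dense in the space `X_{C ∪ E}`. -/
theorem stmt6 (κ : Cardinal.{u}) (hκ : ℵ₀ ≤ κ)
    {S ι : Type u} [LinearOrder ι] (hS : #S = κ) (hι : #ι = 2 ^ κ)
    (C0 D0 : ι → Set S)
    (hCD : ∀ (s : Finset ι) (f : ι → Bool) (s' : Finset ι) (f' : ι → Bool),
        κ ≤ #↥(partInter C0 s f ∩ partInter D0 s' f'))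
    (I J : Set ι) (hIJ : Disjoint I J)
    (j : ι → ι → ℕ → ι)
    (hjJ : ∀ α β m, α ∈ I → β ∈ I → α < β → j α β m ∈ J)
    (hjinj : ∀ α β m α' β' m', α ∈ I → β ∈ I → α < β → α' ∈ I → β' ∈ I → α' < β' →
        j α β m = j α' β' m' → α = α' ∧ β = β' ∧ m = m') :
    ∀ α ∈ I, ∀ β ∈ I, α ≠ β →
      @IsNowhereDense S (topCE C0 D0 j I) (D0 α ∩ D0 β) := by
  intro α hα β hβ hne
  have hCD' : ∀ (s : Finset ι) (f : ι → Bool) (s' : Finset ι) (f' : ι → Bool),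
      (partInter C0 s f ∩ partInter D0 s' f').Nonempty := fun s f s' f' =>
    nonempty_coe_sort.1 <| mk_ne_zero_iff.1
      ((aleph0_pos.trans_le hκ).trans_le (hCD s f s' f')).ne'
  rcases lt_or_gt_of_ne hne with hlt | hlt
  · exact isNowhereDense_inter_of_lt C0 D0 hCD' I J hIJ j hjJ hjinj α β hα hβ hlt
  · rw [inter_comm]
    exact isNowhereDense_inter_of_lt C0 D0 hCD' I J hIJ j hjJ hjinj β α hβ hα hlt
end

section
/- Let κ be an infinite cardinal and let C = ⟨C⁰_ξ, C¹_ξ⟩ (ξ < 2^κ) and D = ⟨D⁰_i, D¹_i⟩ (i < 2^κ) be families of 2-partitions of κ such that C[ε] ∩ D[φ] ≠ ∅ for all finite partial functions ε, φ from 2^κ to 2, and such that every dense subset of the space X_C contains a set of the form D[φ] ∩ C[ε] for some finite partial functions ε, φ from 2^κ to 2. Then X_C is not ω₁-resolvable: there do not exist ω₁ pairwise disjoint dense subsets of X_C. -/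
/-!
Each dense set `F` of a disjoint family contains a set `D[φ] ∩ C[ε]`. The pair `(ε, φ)` is a
finite partial function from `ι ⊕ ι` to `2`, and it determines a basic clopen cylinder of the
Cantor cube `ι ⊕ ι → Bool`. A point common to two such cylinders is a total function extending
both pairs, so independence of `C` and `D` gives a point in both of the corresponding sets
`D[φ] ∩ C[ε]`. Hence disjoint dense sets give disjoint cylinders
(`disjoint_cylinders_of_disjoint_parts`). The Cantor cube is ccc: every cylinder has positive
measure for the fair-coin product measure, so a disjoint family of cylinders is countable
(`countable_of_disjoint_cylinders`). A disjoint family of dense sets is therefore countable.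
-/

open Cardinal Set

universe u

/-- The topology of `X_B`: generated by the subbase `{B⁰_ζ, B¹_ζ : ζ}`. -/
def topB {ι S : Type u} (B0 : ι → Set S) : TopologicalSpace S :=
  TopologicalSpace.generateFrom {s | ∃ ζ : ι, s = B0 ζ ∨ s = (B0 ζ)ᶜ}

open MeasureTheory in
/-- The countable chain condition for the Cantor cube `I → Bool`, in terms of basic cylinders. -/
theorem countable_of_disjoint_cylinders {I A : Type*} (t : A → Finset I) (g : A → I → Bool)
    (hdisj : ∀ a b, a ≠ b →
      Disjoint ((t a : Set I).pi fun i => {g a i}) ((t b : Set I).pi fun i => {g b i})) :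
    Countable A := by
  let ν : Measure Bool := ProbabilityTheory.uniformOn Set.univ
  have : IsProbabilityMeasure ν :=
    ProbabilityTheory.isProbabilityMeasure_uniformOn Set.finite_univ Set.univ_nonempty
  have hν : ∀ b : Bool, ν {b} ≠ 0 := fun b => by
    rw [ProbabilityTheory.uniformOn_univ, Measure.count_singleton]
    simp
  have h := Measure.countable_meas_pos_of_disjoint_iUnion
    (μ := Measure.infinitePi fun _ : I => ν)
    (As := fun a => (t a : Set I).pi fun i => ({g a i} : Set Bool))
    (fun a => MeasurableSet.pi (t a).countable_toSet fun i _ => measurableSet_singleton _)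
    (fun a b hab => hdisj a b hab)
  have huniv : {a | 0 < (Measure.infinitePi fun _ : I => ν)
      ((t a : Set I).pi fun i => ({g a i} : Set Bool))} = Set.univ := by
    refine Set.eq_univ_of_forall fun a => ?_
    rw [Set.mem_ofPred_eq, Measure.infinitePi_pi _ fun i _ => measurableSet_singleton _]
    exact pos_iff_ne_zero.mpr (Finset.prod_ne_zero_iff.mpr fun i _ => hν _)
  rw [huniv] at h
  exact Set.countable_univ_iff.mp h

/-- `B[ε]` only grows when the finite partial function `ε` is restricted. -/
theorem partInter_subset_of_agree {ι S : Type u} (B0 : ι → Set S) {s t : Finset ι}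
    {f g : ι → Bool} (hst : s ⊆ t) (hfg : ∀ i ∈ s, g i = f i) :
    partInter B0 t g ⊆ partInter B0 s f := by
  intro x hx
  simp only [partInter, Set.mem_iInter] at hx ⊢
  intro i hi
  rw [← hfg i hi]
  exact hx i (hst hi)

/-- Incompatibility: if `D[φ₁] ∩ C[ε₁]` and `D[φ₂] ∩ C[ε₂]` are disjoint, then no total function
extends both `ε₁ ⊕ φ₁` and `ε₂ ⊕ φ₂`. -/
theorem disjoint_cylinders_of_disjoint_parts {ι S : Type u} (C0 D0 : ι → Set S)
    (hCD : ∀ (s : Finset ι) (f : ι → Bool) (s' : Finset ι) (f' : ι → Bool),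
        (partInter C0 s f ∩ partInter D0 s' f').Nonempty)
    {s₁ t₁ s₂ t₂ : Finset ι} {f₁ g₁ f₂ g₂ : ι → Bool}
    (h : Disjoint (partInter D0 t₁ g₁ ∩ partInter C0 s₁ f₁)
      (partInter D0 t₂ g₂ ∩ partInter C0 s₂ f₂)) :
    Disjoint ((s₁.disjSum t₁ : Set (ι ⊕ ι)).pi fun i => {Sum.elim f₁ g₁ i})
      ((s₂.disjSum t₂ : Set (ι ⊕ ι)).pi fun i => {Sum.elim f₂ g₂ i}) := by
  classical
  refine Set.disjoint_left.mpr fun x hx₁ hx₂ => ?_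
  obtain ⟨p, hpC, hpD⟩ := hCD (s₁ ∪ s₂) (fun i => x (.inl i)) (t₁ ∪ t₂) (fun i => x (.inr i))
  refine Set.disjoint_left.mp h (show p ∈ _ from ⟨?_, ?_⟩) ⟨?_, ?_⟩
  · exact partInter_subset_of_agree D0 Finset.subset_union_left
      (fun i hi => by simpa using hx₁ (.inr i) (by simpa using hi)) hpD
  · exact partInter_subset_of_agree C0 Finset.subset_union_left
      (fun i hi => by simpa using hx₁ (.inl i) (by simpa using hi)) hpC
  · exact partInter_subset_of_agree D0 Finset.subset_union_right
      (fun i hi => by simpa using hx₂ (.inr i) (by simpa using hi)) hpD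
  · exact partInter_subset_of_agree C0 Finset.subset_union_right
      (fun i hi => by simpa using hx₂ (.inl i) (by simpa using hi)) hpC

/-- If `C[ε] ∩ D[φ] ≠ ∅` for all finite partial functions `ε, φ` and every dense subset
of `X_C` contains a set of the form `D[φ] ∩ C[ε]`, then `X_C` is not `ω₁`-resolvable. -/
theorem stmt7 (κ : Cardinal.{u}) (hκ : ℵ₀ ≤ κ)
    {S ι : Type u} (hS : #S = κ) (hι : #ι = 2 ^ κ)
    (C0 D0 : ι → Set S)
    (hCD : ∀ (s : Finset ι) (f : ι → Bool) (s' : Finset ι) (f' : ι → Bool),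
        (partInter C0 s f ∩ partInter D0 s' f').Nonempty)
    (hforced : ∀ F : Set S, @Dense S (topB C0) F →
        ∃ (s : Finset ι) (f : ι → Bool) (s' : Finset ι) (f' : ι → Bool),
          partInter D0 s' f' ∩ partInter C0 s f ⊆ F) :
    ¬ ∃ 𝒟 : Set (Set S), #𝒟 = aleph 1 ∧ (∀ D ∈ 𝒟, @Dense S (topB C0) D) ∧
        𝒟.PairwiseDisjoint id := by
  rintro ⟨𝒟, hcard, hdense, hdisj⟩
  choose s f s' f' hsub using fun F : 𝒟 => hforced F.1 (hdense F.1 F.2)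
  have hcount : Countable 𝒟 :=
    countable_of_disjoint_cylinders (fun F => (s F).disjSum (s' F))
      (fun F => Sum.elim (f F) (f' F)) fun F G hFG =>
        disjoint_cylinders_of_disjoint_parts C0 D0 hCD <|
          (hdisj F.2 G.2 fun h => hFG (Subtype.ext h)).mono (hsub F) (hsub G)
  have hle : aleph 1 ≤ ℵ₀ := hcard ▸ Cardinal.mk_le_aleph0_iff.mpr hcount
  exact absurd hle (not_le.mpr Cardinal.aleph0_lt_aleph_one)
end

section
/- A topological space X is almost ω-resolvable if and only if it is ω-resolvable. In particular, if X contains countably infinitely many dense sets any two of which have nowhere dense intersection, then X contains countably infinitely many pairwise disjoint dense sets. -/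
/-!
Given dense sets `D 0, D 1, …` with pairwise nowhere dense intersections, the sets
`D n \ ⋃ m < n, D m` are pairwise disjoint. They are still dense, because only the finite union of
the nowhere dense sets `D n ∩ D m` is removed from `D n`, and removing a nowhere dense set from a
dense set leaves a dense set (`Dense.diff_isNowhereDense`). The converse holds because the empty
set is nowhere dense.
-/

open Cardinal Set

universe u

theorem Dense.diff_isNowhereDense {X : Type*} [TopologicalSpace X] {D N : Set X}
    (hD : Dense D) (hN : IsNowhereDense N) : Dense (D \ N) := by
  have h : Dense (closure N)ᶜ := interior_eq_empty_iff_dense_compl.mp hN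
  refine (hD.inter_of_isOpen_right h isClosed_closure.isOpen_compl).mono ?_
  exact fun x hx => ⟨hx.1, fun hxN => hx.2 (subset_closure hxN)⟩

/-- Removing the finitely many sets `D m` with `m < k` keeps `D n` dense as long as `k ≤ n`. -/
theorem dense_diff_iUnion_lt {X : Type*} [TopologicalSpace X] {D : ℕ → Set X}
    (hD : ∀ n, Dense (D n)) (hN : ∀ m n, m ≠ n → IsNowhereDense (D m ∩ D n)) (n k : ℕ)
    (hk : k ≤ n) : Dense (D n \ ⋃ m < k, D m) := by
  induction k with
  | zero => simpa using hD n
  | succ k ih =>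
    refine ((ih (by omega)).diff_isNowhereDense (hN k n (by omega))).mono ?_
    rintro x ⟨⟨hx, hxk⟩, hxN⟩
    refine ⟨hx, ?_⟩
    simp only [mem_iUnion, not_exists] at hxk ⊢
    intro m hm hxm
    rcases Nat.lt_succ_iff_lt_or_eq.mp hm with h | rfl
    · exact hxk m h hxm
    · exact hxN ⟨hxm, hx⟩

/-- A space is almost `ω`-resolvable iff it is `ω`-resolvable; in particular, if `X`
has countably infinitely many dense sets with pairwise nowhere dense intersections,
then it has countably infinitely many pairwise disjoint dense sets. -/
theorem stmt9 (X : Type u) [TopologicalSpace X] :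
    IsAlmostResolvable X ℵ₀ ↔ IsResolvable X ℵ₀ := by
  constructor
  · rintro ⟨𝒟, hcard, hdense, hnd⟩
    obtain ⟨hden⟩ := Cardinal.denumerable_iff.mpr hcard
    let e : 𝒟 ≃ ℕ := Denumerable.eqv 𝒟
    let D : ℕ → Set X := fun n => (e.symm n : Set X)
    have hD : ∀ n, Dense (D n) := fun n => hdense _ (e.symm n).2
    have hDinj : Function.Injective D := Subtype.val_injective.comp e.symm.injective
    have hN : ∀ m n, m ≠ n → IsNowhereDense (D m ∩ D n) := fun m n hmn =>
      hnd _ (e.symm m).2 _ (e.symm n).2 (hDinj.ne hmn)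
    -- An empty space has only one subset, so it cannot carry infinitely many dense sets.
    have hX : Nonempty X := by
      by_contra h
      rw [not_nonempty_iff] at h
      exact zero_ne_one (hDinj (Subsingleton.elim (D 0) (D 1)))
    let E : ℕ → Set X := fun n => D n \ ⋃ m < n, D m
    have hE : ∀ n, Dense (E n) := fun n => dense_diff_iUnion_lt hD hN n n le_rfl
    have hlt : ∀ m n, m < n → Disjoint (E m) (E n) := fun m n hmn =>
      Set.disjoint_left.mpr fun x hxm hxn =>
        hxn.2 (mem_biUnion (show m ∈ {m | m < n} from hmn) hxm.1)
    have hdisj : ∀ m n, m ≠ n → Disjoint (E m) (E n) := fun m n hmn =>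
      hmn.lt_or_gt.elim (hlt m n) fun h => (hlt n m h).symm
    have hEinj : Function.Injective E := by
      intro m n hmn
      by_contra hne
      have h := hdisj m n hne
      rw [hmn, disjoint_self] at h
      exact (hE n).nonempty.ne_empty h
    refine ⟨range E, ?_, ?_, ?_⟩
    · exact Cardinal.denumerable_iff.mp ⟨Denumerable.mk' (Equiv.ofInjective E hEinj).symm⟩
    · rintro _ ⟨n, rfl⟩
      exact hE n
    · rintro _ ⟨m, rfl⟩ _ ⟨n, rfl⟩ hmn
      exact hdisj m n fun h => hmn (congrArg E h)
  · rintro ⟨𝒟, hcard, hdense, hdisj⟩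
    refine ⟨𝒟, hcard, hdense, fun D hD E hE hne => ?_⟩
    have h : D ∩ E = ∅ := Set.disjoint_iff_inter_eq_empty.mp (hdisj hD hE hne)
    simp [h]
end

section
/- No topological space X with nonempty open sets is almost (2^{Δ(X)})⁺-resolvable: every family of dense subsets of X such that any two distinct members have nowhere dense intersection has cardinality at most 2^{Δ(X)}, where Δ(X) = min{|G| : G a nonempty open subset of X}. -/
/-!
Fix a nonempty open set `G` of minimal cardinality. The trace map `D ↦ D ∩ G` is injective on `𝒟`:
if distinct `D, E ∈ 𝒟` had the same trace on `G`, then `D ∩ E` would contain `D ∩ G`, whose closure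
contains `G` because `D` is dense, so `D ∩ E` would not be nowhere dense. Hence `𝒟` has at most
as many members as `G` has subsets, namely `2 ^ Δ(X)`.
-/

open Cardinal Set

universe u

/-- No nonempty space is almost `(2^Δ(X))⁺`-resolvable: any family of dense subsets
with pairwise nowhere dense intersections has cardinality at most `2^Δ(X)`. -/
theorem stmt10 (X : Type u) [TopologicalSpace X] [Nonempty X]
    (𝒟 : Set (Set X)) (hdense : ∀ D ∈ 𝒟, Dense D)
    (hnwd : ∀ D ∈ 𝒟, ∀ E ∈ 𝒟, D ≠ E → IsNowhereDense (D ∩ E)) :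
    #↥𝒟 ≤ 2 ^ dispersion X := by
  obtain ⟨G, hGo, hGne, hG⟩ : dispersion X ∈
      {c : Cardinal.{u} | ∃ G : Set X, IsOpen G ∧ G.Nonempty ∧ #G = c} :=
    csInf_mem ⟨_, univ, isOpen_univ, univ_nonempty, rfl⟩
  rw [← hG, ← Cardinal.mk_set]
  refine Cardinal.mk_le_of_injective
    (f := fun D : 𝒟 => ((↑) ⁻¹' D.1 : Set G)) ?_
  rintro ⟨D, hD⟩ ⟨E, hE⟩ h
  by_contra hne
  have hDE : D ≠ E := fun h' => hne (Subtype.ext h')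
  have hsub : G ∩ D ⊆ D ∩ E := fun x hx =>
    ⟨hx.2, (Set.ext_iff.mp h ⟨x, hx.1⟩).mp hx.2⟩
  have hGcl : G ⊆ closure (D ∩ E) :=
    ((hdense D hD).open_subset_closure_inter hGo).trans (closure_mono hsub)
  have hint : G ⊆ interior (closure (D ∩ E)) := interior_maximal hGcl hGo
  have hempty : interior (closure (D ∩ E)) = ∅ := hnwd D hD E hE hDE
  rw [hempty] at hint
  exact hGne.ne_empty (subset_empty_iff.mp hint)
end
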